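/- Assume ς² < ∞ and liminf_{T→∞} Var(T)/T = ∞. Then for α ∈ [1,2) and h slowly varying at infinity: Var(T) ~ T^α h(T) as T → ∞ if and only if ν(U_x) ~ C(α)·x^{2−α}·h(1/x) as x → 0⁺. -/

import Mathlib

open MeasureTheory Filter Topology Set

/-- A function `h : (0,∞) → (0,∞)` is slowly varying at infinity: positive and
continuous on `(0,∞)` with `h(st)/h(t) → 1` as `t → ∞` for every `s > 0`. -/
def SlowlyVaryingAtTop (h : ℝ → ℝ) : Prop :=
  (∀ t > 0, 0 < h t) ∧ ContinuousOn h (Set.Ioi 0) ∧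
    ∀ s > 0, Tendsto (fun t => h (s * t) / h t) atTop (𝓝 1)

/-- `C(α) = Γ(1+α) sin(απ/2) / (π(2-α))`. -/
noncomputable def Cconst (α : ℝ) : ℝ :=
  Real.Gamma (1 + α) * Real.sin (α * Real.pi / 2) / (Real.pi * (2 - α))

/-- The continuous-time variance
`Var(T) = 2 ∫_{H⁻} Re[(e^{zT}-zT-1)/z²] ν(dz)`. -/
noncomputable def VarCt (ν : Measure ℂ) (T : ℝ) : ℝ :=
  2 * ∫ z, ((Complex.exp (z * (T : ℂ)) - z * (T : ℂ) - 1) / z ^ 2).re ∂ν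

/-- `ς² = -2 ∫_{H⁻} Re(1/z) ν(dz) ∈ [0,∞]`. -/
noncomputable def varsigmaSq (ν : Measure ℂ) : ENNReal :=
  2 * ∫⁻ z, ENNReal.ofReal (-(z⁻¹.re)) ∂ν

/-- `U_x = {a + ib : 0 ≤ -a ≤ |b| ≤ x}`. -/
def UsetCt (x : ℝ) : Set ℂ :=
  {z : ℂ | 0 ≤ -z.re ∧ -z.re ≤ |z.im| ∧ |z.im| ≤ x}

section
open scoped NNReal ENNReal BoundedContinuousFunction

namespace RV

lemma swap_nonneg (f : ℝ → ℝ → ℝ) (hm : Measurable (Function.uncurry f))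
    (hf : ∀ x > 0, ∀ y > 0, 0 ≤ f x y) (g1 g2 : ℝ → ℝ)
    (h1 : ∀ x > 0, IntegrableOn (fun y => f x y) (Ioi 0) ∧ ∫ y in Ioi (0:ℝ), f x y = g1 x)
    (h2 : ∀ y > 0, IntegrableOn (fun x => f x y) (Ioi 0) ∧ ∫ x in Ioi (0:ℝ), f x y = g2 y) :
    ∫ x in Ioi (0:ℝ), g1 x = ∫ y in Ioi (0:ℝ), g2 y := by
  have e1 : ∫ x in Ioi (0:ℝ), g1 x = ∫ x in Ioi (0:ℝ), ∫ y in Ioi (0:ℝ), f x y :=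
    setIntegral_congr_fun measurableSet_Ioi (fun x hx => (h1 x hx).2.symm)
  have e2 : ∫ x in Ioi (0:ℝ), g2 x = ∫ y in Ioi (0:ℝ), ∫ x in Ioi (0:ℝ), f x y :=
    setIntegral_congr_fun measurableSet_Ioi (fun x hx => (h2 x hx).2.symm)
  have hm' : Measurable (Function.uncurry (fun y x => f x y)) := hm.comp measurable_swap
  rw [e1, e2, integral_eq_lintegral_of_nonneg_ae, integral_eq_lintegral_of_nonneg_ae]
  · congr 1
    have l1 : ∫⁻ x in Ioi (0:ℝ), ENNReal.ofReal (∫ y in Ioi (0:ℝ), f x y) =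
        ∫⁻ x in Ioi (0:ℝ), ∫⁻ y in Ioi (0:ℝ), ENNReal.ofReal (f x y) := by
      refine setLIntegral_congr_fun measurableSet_Ioi (fun x hx => ?_)
      refine ofReal_integral_eq_lintegral_ofReal (h1 x hx).1 ?_
      filter_upwards [ae_restrict_mem measurableSet_Ioi] with y hy using hf x hx y hy
    have l2 : ∫⁻ y in Ioi (0:ℝ), ENNReal.ofReal (∫ x in Ioi (0:ℝ), f x y) =
        ∫⁻ y in Ioi (0:ℝ), ∫⁻ x in Ioi (0:ℝ), ENNReal.ofReal (f x y) := by
      refine setLIntegral_congr_fun measurableSet_Ioi (fun y hy => ?_)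
      refine ofReal_integral_eq_lintegral_ofReal (h2 y hy).1 ?_
      filter_upwards [ae_restrict_mem measurableSet_Ioi] with x hx using hf x hx y hy
    rw [l1, l2]
    exact lintegral_lintegral_swap (hm.ennreal_ofReal.aemeasurable)
  · filter_upwards [ae_restrict_mem measurableSet_Ioi] with y hy
    exact setIntegral_nonneg measurableSet_Ioi (fun x hx => hf x hx y hy)
  · exact (hm'.stronglyMeasurable.integral_prod_right).aestronglyMeasurable
  · filter_upwards [ae_restrict_mem measurableSet_Ioi] with x hx
    exact setIntegral_nonneg measurableSet_Ioi (fun y hy => hf x hx y hy)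
  · exact (hm.stronglyMeasurable.integral_prod_right).aestronglyMeasurable

lemma exp_cos (t u : ℝ) (ht : 0 < t) :
    IntegrableOn (fun s => Real.exp (-(t * s)) * Real.cos (u * s)) (Ioi 0) ∧
    ∫ s in Ioi (0:ℝ), Real.exp (-(t * s)) * Real.cos (u * s) = t / (t ^ 2 + u ^ 2) := by
  have ha : ((-t + u * Complex.I : ℂ)).re < 0 := by simpa using ht
  have hi := integrableOn_exp_mul_complex_Ioi ha 0
  have hv := integral_exp_mul_complex_Ioi ha 0
  have hre : ∀ s : ℝ, (Complex.exp ((-t + u * Complex.I) * s)).re =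
      Real.exp (-(t * s)) * Real.cos (u * s) := by
    intro s
    rw [Complex.exp_re]
    simp
  refine ⟨?_, ?_⟩
  · have := hi.re
    simpa [hre] using! this
  · have h2 := congrArg Complex.re hv
    rw [← RCLike.re_to_complex, ← integral_re hi] at h2
    simp only [RCLike.re_to_complex, hre] at h2
    rw [h2]
    have : (t ^ 2 + u ^ 2) ≠ 0 := by positivity
    simp [Complex.div_re, Complex.normSq_apply]
    field_simp

lemma exp_int (t : ℝ) (ht : 0 < t) :
    IntegrableOn (fun s => Real.exp (-(t * s))) (Ioi 0) ∧
    ∫ s in Ioi (0:ℝ), Real.exp (-(t * s)) = 1 / t := by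
  have := exp_cos t 0 ht
  simp at this
  refine ⟨this.1, ?_⟩
  rw [this.2]; field_simp

lemma beta_int (α : ℝ) (h0 : 0 < α) (h2 : α < 2) :
    ∫ t in Ioi (0:ℝ), t ^ (α - 1) / (1 + t ^ 2) = Real.pi / (2 * Real.sin (α * Real.pi / 2)) := by
  have key := swap_nonneg (fun t x => t ^ (α - 1) * Real.exp (-((1 + t ^ 2) * x)))
    (by fun_prop)
    (fun t ht x hx => by positivity)
    (fun t => t ^ (α - 1) / (1 + t ^ 2))
    (fun x => (1 / 2 * Real.Gamma (α / 2)) * (x ^ (1 - α / 2 - 1) * Real.exp (-(1 * x))))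
    (by
      intro t ht
      have := exp_int (1 + t ^ 2) (by positivity)
      refine ⟨this.1.const_mul _, ?_⟩
      rw [integral_const_mul, this.2]; ring)
    (by
      intro x hx
      have hv := integral_rpow_mul_exp_neg_mul_rpow (p := 2) (q := α - 1) (b := x) (by norm_num)
        (by linarith) hx
      have he : ∀ t ∈ Ioi (0:ℝ), t ^ (α - 1) * Real.exp (-((1 + t ^ 2) * x)) =
          Real.exp (-x) * (t ^ (α - 1) * Real.exp (-x * t ^ (2:ℝ))) := by
        intro t ht
        rw [mul_left_comm, ← Real.exp_add]
        congr 2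
        rw [Real.rpow_two]; ring
      have hval : ∫ t in Ioi (0:ℝ), t ^ (α - 1) * Real.exp (-((1 + t ^ 2) * x)) =
          (1 / 2 * Real.Gamma (α / 2)) * (x ^ (1 - α / 2 - 1) * Real.exp (-(1 * x))) := by
        rw [setIntegral_congr_fun measurableSet_Ioi he, integral_const_mul, hv]
        have e1 : (-(α - 1 + 1) / 2) = 1 - α / 2 - 1 := by ring
        have e2 : (α - 1 + 1) / 2 = α / 2 := by ring
        rw [e1, e2]; ring_nf
      refine ⟨?_, hval⟩
      by_contra hni
      rw [integral_undef hni] at hval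
      have hx' : (0:ℝ) < x := hx
      have : 0 < Real.Gamma (α / 2) := Real.Gamma_pos_of_pos (by linarith)
      have : 0 < (1 / 2 * Real.Gamma (α / 2)) * (x ^ (1 - α / 2 - 1) * Real.exp (-(1 * x))) := by
        positivity
      linarith)
  rw [key, integral_const_mul, Real.integral_rpow_mul_exp_neg_mul_Ioi (by linarith) one_pos]
  have := Real.Gamma_mul_Gamma_one_sub (α / 2)
  simp only [div_one, Real.one_rpow, one_mul]
  rw [mul_assoc, this]
  rw [show Real.pi * (α / 2) = α * Real.pi / 2 by ring]
  ring

lemma sin_pos' (α : ℝ) (h0 : 0 < α) (h2 : α < 2) : 0 < Real.sin (α * Real.pi / 2) := by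
  apply Real.sin_pos_of_pos_of_lt_pi
  · positivity
  · nlinarith [Real.pi_pos]

lemma I_int (α : ℝ) (h0 : 0 < α) (h2 : α < 2) :
    ∫ u in Ioi (0:ℝ), (1 - Real.cos u) * u ^ (-1 - α) =
      Real.pi / (2 * Real.Gamma (1 + α) * Real.sin (α * Real.pi / 2)) := by
  have hG : 0 < Real.Gamma (1 + α) := Real.Gamma_pos_of_pos (by linarith)
  have key := swap_nonneg (fun u t => (1 - Real.cos u) * (t ^ (1 + α - 1) * Real.exp (-(u * t))))
    (by fun_prop)
    (fun t ht x hx => by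
      have := Real.cos_le_one t
      have : 0 ≤ 1 - Real.cos t := by linarith
      positivity)
    (fun u => Real.Gamma (1 + α) * ((1 - Real.cos u) * u ^ (-1 - α)))
    (fun t => t ^ (α - 1) / (1 + t ^ 2))
    (by
      intro u hu
      have hu' : (0:ℝ) < u := hu
      have hv := Real.integral_rpow_mul_exp_neg_mul_Ioi (a := 1 + α) (r := u) (by linarith) hu
      have hi : IntegrableOn (fun t => t ^ (1 + α - 1) * Real.exp (-(u * t))) (Ioi 0) := by
        by_contra hni
        rw [integral_undef hni] at hv
        have : 0 < (1 / u) ^ (1 + α) * Real.Gamma (1 + α) := by positivity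
        linarith
      refine ⟨hi.const_mul _, ?_⟩
      rw [integral_const_mul, hv, one_div, Real.inv_rpow hu'.le, ← Real.rpow_neg hu'.le]
      rw [show -(1 + α) = -1 - α by ring]; ring)
    (by
      intro t ht
      have ht' : (0:ℝ) < t := ht
      have ha := exp_int t ht
      have hb := exp_cos t 1 ht
      simp only [one_mul] at hb
      have e : (fun u => (1 - Real.cos u) * (t ^ (1 + α - 1) * Real.exp (-(u * t)))) =
          fun u => t ^ (1 + α - 1) * (Real.exp (-(t * u)) - Real.exp (-(t * u)) * Real.cos u) := by
        ext u; rw [mul_comm u t]; ring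
      rw [e]
      refine ⟨(ha.1.sub hb.1).const_mul _, ?_⟩
      rw [integral_const_mul, integral_sub ha.1 hb.1, ha.2, hb.2]
      rw [show 1 + α - 1 = (α - 1) + 1 by ring, Real.rpow_add ht', Real.rpow_one]
      field_simp
      ring)
  rw [integral_const_mul, beta_int α h0 h2] at key
  have := sin_pos' α h0 h2
  field_simp at key ⊢
  linarith

lemma I_pos (α : ℝ) (h0 : 0 < α) (h2 : α < 2) :
    0 < ∫ u in Ioi (0:ℝ), (1 - Real.cos u) * u ^ (-1 - α) := by
  rw [I_int α h0 h2]
  have hG : 0 < Real.Gamma (1 + α) := Real.Gamma_pos_of_pos (by linarith)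
  have := sin_pos' α h0 h2
  positivity

lemma I_integrable (α : ℝ) (h0 : 0 < α) (h2 : α < 2) :
    IntegrableOn (fun u => (1 - Real.cos u) * u ^ (-1 - α)) (Ioi 0) := by
  by_contra hni
  have := I_pos α h0 h2
  rw [integral_undef hni] at this
  exact lt_irrefl _ this

end RV


namespace RV

/-- continuous version of `(1 - cos u)/u²` -/
noncomputable def kk (u : ℝ) : ℝ := Real.sinc (u / 2) ^ 2 / 2

lemma kk_cont : Continuous kk := by unfold kk; fun_prop

lemma kk_nonneg (u : ℝ) : 0 ≤ kk u := by unfold kk; positivity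

lemma kk_le (u : ℝ) : kk u ≤ 1 / 2 := by
  unfold kk
  have := Real.abs_sinc_le_one (u / 2)
  have : Real.sinc (u / 2) ^ 2 ≤ 1 := by rw [← sq_abs]; nlinarith [abs_nonneg (Real.sinc (u / 2))]
  linarith

lemma kk_eq {u : ℝ} (hu : u ≠ 0) : kk u = (1 - Real.cos u) / u ^ 2 := by
  unfold kk
  rw [Real.sinc_of_ne_zero (by positivity)]
  have h := Real.cos_sq_add_sin_sq (u / 2)
  have h2 := Real.cos_two_mul (u / 2)
  rw [show 2 * (u / 2) = u by ring] at h2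
  rw [h2]
  field_simp
  linarith

lemma kk_le' {u : ℝ} (hu : u ≠ 0) : kk u ≤ 2 / u ^ 2 := by
  rw [kk_eq hu]
  gcongr
  linarith [Real.neg_one_le_cos u]

lemma kk_abs (u : ℝ) : kk |u| = kk u := by
  unfold kk
  rcases abs_choice u with h | h <;> rw [h]
  rw [neg_div, Real.sinc_neg]

noncomputable def kkb : ℝ →ᵇ ℝ :=
  BoundedContinuousFunction.ofNormedAddCommGroup kk kk_cont (1/2)
    (fun u => by rw [Real.norm_of_nonneg (kk_nonneg u)]; exact kk_le u)

lemma weak_of_cdf (m : ℝ → Measure ℝ) [hm : ∀ T, IsFiniteMeasure (m T)] (m0 : Measure ℝ)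
    [hm0 : IsFiniteMeasure m0] (hne : m0 ≠ 0)
    (hcdf : ∀ x, Tendsto (fun T => (m T).real (Iic x)) atTop (𝓝 (m0.real (Iic x))))
    (hmass : Tendsto (fun T => (m T).real univ) atTop (𝓝 (m0.real univ))) (f : ℝ →ᵇ ℝ) :
    Tendsto (fun T => ∫ u, f u ∂(m T)) atTop (𝓝 (∫ u, f u ∂m0)) := by
  let F : ℝ → FiniteMeasure ℝ := fun T => ⟨m T, hm T⟩
  let F0 : FiniteMeasure ℝ := ⟨m0, hm0⟩
  have hF0 : F0 ≠ 0 := by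
    intro h
    apply hne
    exact congrArg Subtype.val h
  have conv : ∀ (a : ℝ → ℝ≥0) (b : ℝ≥0), Tendsto (fun T => (a T : ℝ)) atTop (𝓝 (b:ℝ)) →
      Tendsto a atTop (𝓝 b) := fun a b h => by exact_mod_cast h
  have hmassF : Tendsto (fun T => (F T).mass) atTop (𝓝 F0.mass) := conv _ _ hmass
  have hmne : F0.mass ≠ 0 := by rwa [Ne, FiniteMeasure.mass_zero_iff]
  have hnzF : ∀ᶠ T in atTop, F T ≠ 0 := by
    filter_upwards [hmassF.eventually_ne hmne] with T hT
    rwa [Ne, ← FiniteMeasure.mass_zero_iff]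
  have hIoc : ∀ a b : ℝ, a ≤ b → Tendsto (fun T => F T (Ioc a b)) atTop (𝓝 (F0 (Ioc a b))) := by
    intro a b hab
    apply conv
    have e : ∀ (q : Measure ℝ) [IsFiniteMeasure q], q.real (Ioc a b) =
        q.real (Iic b) - q.real (Iic a) := by
      intro q _
      have hd : Ioc a b = Iic b \ Iic a := by ext y; simp [and_comm]
      rw [hd, measureReal_diff (Iic_subset_Iic.2 hab) measurableSet_Iic]
    have := (hcdf b).sub (hcdf a)
    simp only [← e] at this
    exact this
  have hnorm : Tendsto (fun T => (F T).normalize) atTop (𝓝 F0.normalize) := by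
    refine IsPiSystem.tendsto_probabilityMeasure_of_tendsto_of_mem
      (S := {s | ∃ a b : ℝ, a < b ∧ Ioc a b = s}) ?_ ?_ ?_ ?_
    · have := isPiSystem_Ioc (id : ℝ → ℝ) (id : ℝ → ℝ)
      rintro s ⟨a, b, hab, rfl⟩ t ⟨c, d, hcd, rfl⟩ hne
      rw [Ioc_inter_Ioc] at hne ⊢
      refine ⟨_, _, ?_, rfl⟩
      exact nonempty_Ioc.1 hne
    · rintro s ⟨a, b, hab, rfl⟩
      exact measurableSet_Ioc
    · intro u hu x hx
      obtain ⟨ε, hε, hb⟩ := Metric.isOpen_iff.1 hu x hx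
      refine ⟨Ioc (x - ε / 2) (x + ε / 2), ⟨_, _, by linarith, rfl⟩, ?_, ?_⟩
      · exact Ioc_mem_nhds (by linarith) (by linarith)
      · intro y hy
        apply hb
        rw [Metric.mem_ball, Real.dist_eq, abs_lt]
        constructor <;> linarith [hy.1, hy.2]
    · rintro s ⟨a, b, hab, rfl⟩
      rw [FiniteMeasure.normalize_eq_of_nonzero _ hF0]
      have h1 := (hmassF.inv₀ hmne).mul (hIoc a b hab.le)
      refine h1.congr' ?_
      filter_upwards [hnzF] with T hT
      rw [FiniteMeasure.normalize_eq_of_nonzero _ hT]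
  have := FiniteMeasure.tendsto_of_tendsto_normalize_testAgainstNN_of_tendsto_mass hnorm hmassF
  exact FiniteMeasure.tendsto_iff_forall_integral_tendsto.1 this f

/-- mass of the symmetric interval -/
noncomputable def MM (μ : Measure ℝ) (x : ℝ) : ℝ := μ.real (Icc (-x) x)

lemma MM_mono (μ : Measure ℝ) [IsFiniteMeasure μ] {x y : ℝ} (h : x ≤ y) : MM μ x ≤ MM μ y :=
  measureReal_mono (Icc_subset_Icc (by linarith) h)

lemma rpow_int (β x : ℝ) (hβ : 0 < β) (hx : 0 ≤ x) :
    IntegrableOn (fun u => β * u ^ (β - 1)) (Ioc 0 x) ∧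
    ∫ u in Ioc 0 x, β * u ^ (β - 1) = x ^ β := by
  constructor
  · have := (intervalIntegral.intervalIntegrable_rpow' (a := 0) (b := x) (r := β - 1)
      (by linarith)).const_mul β
    rwa [intervalIntegrable_iff_integrableOn_Ioc_of_le hx] at this
  · rw [← intervalIntegral.integral_of_le hx, intervalIntegral.integral_const_mul,
      integral_rpow (Or.inl (by linarith))]
    rw [sub_add_cancel, Real.zero_rpow hβ.ne']
    field_simp
    ring

/-- density measure on `(0,R]` -/
noncomputable def mR (β R : ℝ) : Measure ℝ :=
  (volume.restrict (Ioc 0 R)).withDensity (fun u => ENNReal.ofReal (β * u ^ (β - 1)))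

lemma mR_apply (β R : ℝ) (hβ : 0 < β) (hR : 0 < R) (s : Set ℝ) (hs : MeasurableSet s) (x : ℝ)
    (hx : 0 ≤ x) (h : s ∩ Ioc 0 R = Ioc 0 x) :
    mR β R s = ENNReal.ofReal (x ^ β) := by
  unfold mR
  rw [withDensity_apply _ hs, Measure.restrict_restrict hs, h, ← (rpow_int β x hβ hx).2]
  symm
  refine ofReal_integral_eq_lintegral_ofReal (rpow_int β x hβ hx).1 ?_
  filter_upwards [ae_restrict_mem measurableSet_Ioc] with u hu
  have := hu.1
  positivity

lemma abel_local (μ : Measure ℝ) [IsFiniteMeasure μ] (h0 : μ {0} = 0) (β : ℝ) (hβ : 0 < β)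
    (N : ℝ → ℝ) (hN : ∀ᶠ T in atTop, 0 < N T)
    (hM : ∀ x > 0, Tendsto (fun T => MM μ (x / T) / N T) atTop (𝓝 (x ^ β))) (R : ℝ) (hR : 0 < R) :
    Tendsto (fun T => (∫ b in {b | |b * T| ≤ R}, kk (b * T) ∂μ) / N T) atTop
      (𝓝 (∫ u in Ioc 0 R, kk u * (β * u ^ (β - 1)))) := by
  have hmeas : ∀ T : ℝ, Measurable (fun b : ℝ => |b * T|) := fun T => by fun_prop
  let m : ℝ → Measure ℝ := fun T =>
    (N T).toNNReal⁻¹ • ((μ.map (fun b => |b * T|)).restrict (Iic R))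
  haveI : ∀ T, IsFiniteMeasure (m T) := fun T => by
    haveI : IsFiniteMeasure (μ.map (fun b => |b * T|)) := inferInstance
    infer_instance
  have hmuniv : mR β R univ = ENNReal.ofReal (R ^ β) :=
    mR_apply β R hβ hR univ MeasurableSet.univ R hR.le (by simp)
  haveI : IsFiniteMeasure (mR β R) := ⟨by rw [hmuniv]; exact ENNReal.ofReal_lt_top⟩
  have hset : ∀ T > 0, ∀ x : ℝ, {b : ℝ | |b * T| ≤ x} = Icc (-(x / T)) (x / T) := by
    intro T hT x
    ext b
    rw [mem_setOf_eq, abs_mul, abs_of_pos hT, ← le_div_iff₀ hT, abs_le, mem_Icc]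
  have hreal : ∀ᶠ T in atTop, ∀ s, MeasurableSet s → ∀ x, (s ∩ Iic R = Iic x) →
      (m T).real s = MM μ (x / T) / N T := by
    filter_upwards [hN, eventually_gt_atTop 0] with T hNT hT s hs x hx
    simp only [m, Measure.real, Measure.smul_apply]
    rw [Measure.restrict_apply hs, hx, Measure.map_apply (hmeas T) measurableSet_Iic]
    have : (fun b : ℝ => |b * T|) ⁻¹' Iic x = Icc (-(x / T)) (x / T) := hset T hT x
    rw [this, ENNReal.smul_def, smul_eq_mul, ENNReal.toReal_mul]
    simp [MM, Measure.real, hNT.le]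
    ring
  have hm0 : mR β R ≠ 0 := by
    intro h
    rw [h] at hmuniv
    have : 0 < R ^ β := by positivity
    simp at hmuniv
    linarith
  have hweak := weak_of_cdf m (mR β R) hm0 ?_ ?_ kkb
  · have e0 : ∫ u, kkb u ∂(mR β R) = ∫ u in Ioc 0 R, kk u * (β * u ^ (β - 1)) := by
      unfold mR
      rw [integral_withDensity_eq_integral_toReal_smul (by fun_prop) (by simp)]
      refine setIntegral_congr_fun measurableSet_Ioc (fun u hu => ?_)
      have hu := hu.1
      simp only [smul_eq_mul]
      rw [ENNReal.toReal_ofReal (by positivity), mul_comm]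
      rfl
    rw [e0] at hweak
    refine hweak.congr' ?_
    filter_upwards [hN, eventually_gt_atTop 0] with T hNT hT
    have : ∀ u, kkb u = kk u := fun u => rfl
    simp only [this, m]
    rw [integral_smul_nnreal_measure, setIntegral_map measurableSet_Iic kk_cont.aestronglyMeasurable
      (hmeas T).aemeasurable]
    simp only [kk_abs]
    rw [NNReal.smul_def, smul_eq_mul, NNReal.coe_inv, Real.coe_toNNReal _ hNT.le, div_eq_inv_mul]
    rfl
  · intro x
    rcases le_or_gt x 0 with hx | hx
    · have e : (mR β R).real (Iic x) = 0 := by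
        rw [Measure.real, mR_apply β R hβ hR (Iic x) measurableSet_Iic 0 le_rfl]
        · simp [Real.zero_rpow hβ.ne']
        · ext y; simp; intro h1 h2; linarith
      rw [e]
      refine tendsto_const_nhds.congr' ?_
      filter_upwards [hreal, eventually_gt_atTop 0] with T hT hT0
      rw [hT _ measurableSet_Iic x (by rw [Iic_inter_Iic, min_eq_left (by linarith)])]
      have : MM μ (x / T) ≤ MM μ 0 := MM_mono μ (div_nonpos_of_nonpos_of_nonneg hx hT0.le)
      have h2 : MM μ 0 = 0 := by simp [MM, Measure.real, h0]
      have h3 : 0 ≤ MM μ (x / T) := measureReal_nonneg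
      rw [show MM μ (x / T) = 0 by linarith]; simp
    · have hmin : 0 < min x R := lt_min hx hR
      have e : (mR β R).real (Iic x) = (min x R) ^ β := by
        rw [Measure.real, mR_apply β R hβ hR (Iic x) measurableSet_Iic (min x R) hmin.le]
        · exact ENNReal.toReal_ofReal (by positivity)
        · ext y; simp; tauto
      rw [e]
      refine (hM _ hmin).congr' ?_
      filter_upwards [hreal] with T hT
      rw [hT _ measurableSet_Iic (min x R) (by rw [Iic_inter_Iic])]
  · rw [show (mR β R).real univ = R ^ β by
      rw [Measure.real, hmuniv]; exact ENNReal.toReal_ofReal (by positivity)]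
    refine (hM R hR).congr' ?_
    filter_upwards [hreal] with T hT
    rw [hT univ MeasurableSet.univ R (by simp)]

end RV


namespace RV

noncomputable def AA (μ : Measure ℝ) (x : ℝ) : ℝ := ∫ b in {b | x < |b|}, 1 / b ^ 2 ∂μ

lemma meas_gt (x : ℝ) : MeasurableSet {b : ℝ | x < |b|} :=
  measurableSet_lt measurable_const (by fun_prop)

lemma inv_sq_le {x b : ℝ} (hx : 0 < x) (hb : x < |b|) : 1 / b ^ 2 ≤ 1 / x ^ 2 := by
  rw [← sq_abs b]
  gcongr

lemma AA_int (μ : Measure ℝ) [IsFiniteMeasure μ] {x : ℝ} (hx : 0 < x) :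
    IntegrableOn (fun b : ℝ => 1 / b ^ 2) {b | x < |b|} μ := by
  refine Integrable.of_bound (C := 1 / x ^ 2)
    (by fun_prop : Measurable (fun b : ℝ => 1 / b ^ 2)).aestronglyMeasurable ?_
  filter_upwards [ae_restrict_mem (meas_gt x)] with b hb
  rw [Real.norm_of_nonneg (by positivity)]
  exact inv_sq_le hx hb

lemma AA_le (μ : Measure ℝ) [IsFiniteMeasure μ] {x : ℝ} (hx : 0 < x) :
    AA μ x * x ^ 2 ≤ μ.real univ := by
  have h1 : AA μ x ≤ ∫ b in {b | x < |b|}, 1 / x ^ 2 ∂μ :=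
    setIntegral_mono_on (AA_int μ hx) (integrable_const _) (meas_gt x)
      (fun b hb => inv_sq_le hx hb)
  rw [setIntegral_const, smul_eq_mul] at h1
  have h2 : μ.real {b | x < |b|} ≤ μ.real univ := measureReal_mono (subset_univ _)
  calc AA μ x * x ^ 2 ≤ (μ.real {b | x < |b|} * (1 / x ^ 2)) * x ^ 2 := by gcongr
    _ = μ.real {b | x < |b|} := by field_simp
    _ ≤ _ := h2

lemma AA_rec (μ : Measure ℝ) [IsFiniteMeasure μ] {x : ℝ} (hx : 0 < x) :
    AA μ x * x ^ 2 ≤ AA μ (2 * x) * x ^ 2 + MM μ (2 * x) := by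
  have hu : {b : ℝ | x < |b|} = {b | 2 * x < |b|} ∪ {b | x < |b| ∧ |b| ≤ 2 * x} := by
    ext b; simp only [mem_ofPred_eq, mem_union]
    constructor
    · intro h; rcases lt_or_ge (2 * x) |b| with h' | h' <;> tauto
    · rintro (h | h)
      · linarith
      · exact h.1
  have hm : MeasurableSet {b : ℝ | x < |b| ∧ |b| ≤ 2 * x} :=
    (meas_gt x).inter (measurableSet_le continuous_abs.measurable measurable_const)
  have hd : Disjoint {b : ℝ | 2 * x < |b|} {b | x < |b| ∧ |b| ≤ 2 * x} := by
    rw [Set.disjoint_left]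
    intro b h1 h2
    simp only [mem_ofPred_eq] at h1 h2
    linarith [h2.2]
  have hi := AA_int μ hx
  have e : AA μ x = AA μ (2 * x) + ∫ b in {b | x < |b| ∧ |b| ≤ 2 * x}, 1 / b ^ 2 ∂μ := by
    unfold AA
    rw [hu] at hi ⊢
    exact setIntegral_union hd hm (hi.mono_set subset_union_left) (hi.mono_set subset_union_right)
  have h1 : ∫ b in {b | x < |b| ∧ |b| ≤ 2 * x}, 1 / b ^ 2 ∂μ ≤
      ∫ b in {b | x < |b| ∧ |b| ≤ 2 * x}, 1 / x ^ 2 ∂μ :=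
    setIntegral_mono_on (hi.mono_set (fun b hb => hb.1)) (integrable_const _) hm
      (fun b hb => inv_sq_le hx hb.1)
  rw [setIntegral_const, smul_eq_mul] at h1
  have h2 : μ.real {b | x < |b| ∧ |b| ≤ 2 * x} ≤ MM μ (2 * x) :=
    measureReal_mono (fun b hb => abs_le.1 hb.2)
  rw [e, add_mul]
  gcongr
  calc _ ≤ (μ.real {b | x < |b| ∧ |b| ≤ 2 * x} * (1 / x ^ 2)) * x ^ 2 := by gcongr
    _ = μ.real {b | x < |b| ∧ |b| ≤ 2 * x} := by field_simp
    _ ≤ _ := h2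

lemma AA_bound (μ : Measure ℝ) [IsFiniteMeasure μ] {x0 : ℝ} (hx0 : 0 < x0) (hM0 : 0 < MM μ x0)
    (hdbl : ∀ x, 0 < x → x ≤ x0 → MM μ (2 * x) ≤ 3 * MM μ x) :
    ∃ B : ℝ, 0 < B ∧ ∀ x, 0 < x → x ≤ x0 → AA μ x * x ^ 2 ≤ B * MM μ x := by
  set B := max 12 (μ.real univ / MM μ x0) with hB
  have hB12 : 12 ≤ B := le_max_left _ _
  have hBt : μ.real univ ≤ B * MM μ x0 := by
    rw [← div_le_iff₀ hM0]; exact le_max_right _ _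
  have main : ∀ k : ℕ, ∀ x, x0 / 2 ^ k ≤ x → x ≤ 2 * x0 → AA μ x * x ^ 2 ≤ B * MM μ x := by
    intro k
    induction k with
    | zero =>
      intro x h1 h2
      simp at h1
      have := AA_le μ (lt_of_lt_of_le hx0 h1)
      have h3 := MM_mono μ h1
      nlinarith
    | succ k ih =>
      intro x h1 h2
      rcases le_or_gt (x0 / 2 ^ k) x with h | h
      · exact ih x h h2
      have hxp : 0 < x := lt_of_lt_of_le (by positivity) h1
      have h3 : x0 / 2 ^ k ≤ x0 := div_le_self hx0.le (one_le_pow₀ (by norm_num))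
      have h4 : x0 / 2 ^ k ≤ 2 * x := by
        rw [pow_succ] at h1
        have : x0 / (2 ^ k * 2) = x0 / 2 ^ k / 2 := by field_simp
        linarith
      have h5 := ih (2 * x) h4 (by linarith)
      have h6 := AA_rec μ hxp
      have h7 := hdbl x hxp (by linarith)
      have h8 : 0 ≤ MM μ x := measureReal_nonneg
      nlinarith
  refine ⟨B, by linarith, fun x h1 h2 => ?_⟩
  obtain ⟨k, hk⟩ := exists_pow_lt_of_lt_one (div_pos h1 hx0) (by norm_num : (1/2:ℝ) < 1)
  refine main k x ?_ (by linarith)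
  rw [lt_div_iff₀ hx0] at hk
  have : x0 / 2 ^ k = (1 / 2) ^ k * x0 := by rw [div_pow, one_pow]; ring
  linarith

lemma kk_integrable (μ : Measure ℝ) [IsFiniteMeasure μ] (T : ℝ) :
    Integrable (fun b => kk (b * T)) μ :=
  Integrable.of_bound (C := 1 / 2) (kk_cont.comp (by fun_prop)).aestronglyMeasurable
    (Eventually.of_forall fun b => by
      rw [Real.norm_of_nonneg (kk_nonneg _)]; exact kk_le _)

lemma tail_le (μ : Measure ℝ) [IsFiniteMeasure μ] {T R : ℝ} (hT : 0 < T) (hR : 0 < R) :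
    |∫ b, kk (b * T) ∂μ - ∫ b in {b | |b * T| ≤ R}, kk (b * T) ∂μ| ≤
      2 / T ^ 2 * AA μ (R / T) := by
  have hm : MeasurableSet {b : ℝ | |b * T| ≤ R} := measurableSet_le (by fun_prop) measurable_const
  have hs : {b : ℝ | |b * T| ≤ R}ᶜ = {b | R / T < |b|} := by
    ext b
    simp only [mem_compl_iff, mem_ofPred_eq, not_le]
    rw [abs_mul, abs_of_pos hT, div_lt_iff₀ hT]
  have hx : 0 < R / T := by positivity
  rw [← integral_add_compl hm (kk_integrable μ T), add_sub_cancel_left, hs]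
  rw [abs_of_nonneg (integral_nonneg fun b => kk_nonneg _), AA, ← integral_const_mul]
  refine setIntegral_mono_on (kk_integrable μ T).integrableOn ((AA_int μ hx).const_mul _)
    (meas_gt _) (fun b hb => ?_)
  have hb0 : b ≠ 0 := by
    rintro rfl
    simp only [mem_ofPred_eq, abs_zero] at hb
    linarith
  refine (kk_le' (mul_ne_zero hb0 hT.ne')).trans (le_of_eq ?_)
  field_simp

theorem abelian (μ : Measure ℝ) [IsFiniteMeasure μ] (h0 : μ {0} = 0) (β : ℝ) (hβ : 0 < β)
    (hβ1 : β ≤ 1) (N : ℝ → ℝ) (hN : ∀ᶠ T in atTop, 0 < N T)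
    (hM : ∀ x > 0, Tendsto (fun T => MM μ (x / T) / N T) atTop (𝓝 (x ^ β)))
    (hInt0 : IntegrableOn (fun u => kk u * (β * u ^ (β - 1))) (Ioi 0)) :
    Tendsto (fun T => (∫ b, kk (b * T) ∂μ) / N T) atTop
      (𝓝 (∫ u in Ioi 0, kk u * (β * u ^ (β - 1)))) := by
  -- doubling
  have hdbl : ∃ x0 : ℝ, 0 < x0 ∧ 0 < MM μ x0 ∧
      ∀ x, 0 < x → x ≤ x0 → MM μ (2 * x) ≤ 3 * MM μ x := by
    have h1 := hM 1 one_pos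
    have h2 := hM 2 two_pos
    rw [Real.one_rpow] at h1
    have h2b : (2:ℝ) ^ β ≤ 2 := by
      calc (2:ℝ) ^ β ≤ 2 ^ (1:ℝ) := Real.rpow_le_rpow_of_exponent_le (by norm_num) hβ1
        _ = 2 := by simp
    have e1 := h1.eventually_const_lt (show (0.9:ℝ) < 1 by norm_num)
    have e2 := h2.eventually_lt_const (show (2:ℝ) ^ β < 2.1 by linarith)
    obtain ⟨T0, hT0⟩ := eventually_atTop.1 (e1.and (e2.and hN))
    have hp : 0 < max T0 1 := by positivity
    have base : ∀ T, T0 ≤ T → 0 < MM μ (1 / T) ∧ MM μ (2 / T) ≤ 3 * MM μ (1 / T) := by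
      intro T hT
      obtain ⟨a1, a2, a3⟩ := hT0 T hT
      rw [lt_div_iff₀ a3] at a1
      rw [div_lt_iff₀ a3] at a2
      constructor
      · nlinarith
      · nlinarith
    refine ⟨1 / max T0 1, by positivity, (base _ (le_max_left _ _)).1, fun x hx hx' => ?_⟩
    have : T0 ≤ 1 / x := by
      rw [le_div_iff₀ hp] at hx'
      rw [le_div_iff₀ hx]
      nlinarith [le_max_left T0 1]
    have := (base _ this).2
    rwa [one_div_one_div, show 2 / (1 / x) = 2 * x by field_simp] at this
  obtain ⟨x0, hx0, hM0, hd⟩ := hdbl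
  obtain ⟨B, hB, hAB⟩ := AA_bound μ hx0 hM0 hd
  set L := ∫ u in Ioi 0, kk u * (β * u ^ (β - 1)) with hL
  have hLR : Tendsto (fun R => ∫ u in Ioc 0 R, kk u * (β * u ^ (β - 1))) atTop (𝓝 L) := by
    refine (intervalIntegral_tendsto_integral_Ioi 0 hInt0 tendsto_id).congr' ?_
    filter_upwards [eventually_ge_atTop 0] with R hR
    rw [id, intervalIntegral.integral_of_le hR]
  have hpow : Tendsto (fun R : ℝ => 2 * B * (R ^ (-(2 - β)))) atTop (𝓝 0) := by
    have := (tendsto_rpow_neg_atTop (show 0 < 2 - β by linarith)).const_mul (2 * B)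
    simpa using this
  rw [Metric.tendsto_atTop']
  intro ε hε
  have c1 := hpow.eventually_lt_const (show (0:ℝ) < ε / 4 by positivity)
  have c2 := (Metric.tendsto_nhds.1 hLR) (ε / 4) (by positivity)
  obtain ⟨R, hR1, hR2, hR⟩ := (c1.and (c2.and (eventually_gt_atTop 0))).exists
  have d1 := (Metric.tendsto_nhds.1 (abel_local μ h0 β hβ N hN hM R hR)) (ε / 4) (by positivity)
  have hRp : 2 * B / R ^ 2 * R ^ β < ε / 4 := by
    have : 2 * B / R ^ 2 * R ^ β = 2 * B * R ^ (-(2 - β)) := by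
      rw [show -(2 - β) = β - 2 by ring, Real.rpow_sub hR, Real.rpow_two]; ring
    linarith
  have d2 := ((hM R hR).const_mul (2 * B / R ^ 2)).eventually_lt_const hRp
  obtain ⟨T1, hT1⟩ := eventually_atTop.1 (d1.and (d2.and (hN.and
    ((eventually_gt_atTop 0).and (eventually_ge_atTop (R / x0))))))
  refine ⟨T1, fun T hT => ?_⟩
  obtain ⟨a1, a2, a3, a4, a5⟩ := hT1 T hT.le
  have t1 := tail_le μ a4 hR
  have hRT : R / T ≤ x0 := by
    rw [div_le_iff₀ a4]; rw [div_le_iff₀ hx0] at a5; linarith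
  have t2 := hAB (R / T) (by positivity) hRT
  have t3 : 2 / T ^ 2 * AA μ (R / T) ≤ 2 * B / R ^ 2 * MM μ (R / T) := by
    have : 2 / T ^ 2 * AA μ (R / T) = 2 / R ^ 2 * (AA μ (R / T) * (R / T) ^ 2) := by
      field_simp
    rw [this, show 2 * B / R ^ 2 * MM μ (R / T) = 2 / R ^ 2 * (B * MM μ (R / T)) by ring]
    gcongr
  rw [Real.dist_eq] at *
  set P := ∫ b, kk (b * T) ∂μ
  set Q := ∫ b in {b | |b * T| ≤ R}, kk (b * T) ∂μ
  have t4 : |P / N T - Q / N T| < ε / 4 := by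
    rw [← sub_div, abs_div, abs_of_pos a3, div_lt_iff₀ a3]
    rw [← mul_div_assoc, div_lt_iff₀ a3] at a2
    linarith
  rw [abs_lt] at *
  constructor <;> linarith [t4.1, t4.2, a1.1, a1.2, hR2.1, hR2.2]

end RV


namespace RV

/-- `pp u t = (1 - cos (u t))/u²`, continuously extended -/
noncomputable def pp (t u : ℝ) : ℝ := t ^ 2 * kk (u * t)

lemma pp_nonneg (t u : ℝ) : 0 ≤ pp t u := mul_nonneg (sq_nonneg _) (kk_nonneg _)

lemma pp_eq (t : ℝ) {u : ℝ} (hu : u ≠ 0) : pp t u = (1 - Real.cos (u * t)) / u ^ 2 := by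
  unfold pp
  rcases eq_or_ne t 0 with rfl | ht
  · simp
  · rw [kk_eq (mul_ne_zero hu ht)]; field_simp

lemma pp_zero (t : ℝ) : pp t 0 = t ^ 2 / 2 := by
  unfold pp kk; simp; ring

lemma pp_neg (t u : ℝ) : pp (-t) u = pp t u := by
  unfold pp; rw [← kk_abs, mul_neg, abs_neg, kk_abs]; ring

lemma pp_neg' (t u : ℝ) : pp t (-u) = pp t u := by
  unfold pp; rw [← kk_abs, neg_mul, abs_neg, kk_abs]

lemma pp_cont (u : ℝ) : Continuous (fun t => pp t u) := by
  unfold pp; have := kk_cont; fun_prop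

lemma pp_cont2 : Continuous (fun q : ℝ × ℝ => pp q.1 q.2) := by
  unfold pp; have := kk_cont; fun_prop

lemma one_sub_cos_eq (x : ℝ) : 1 - Real.cos x = 2 * Real.sin (x / 2) ^ 2 := by
  have h := Real.cos_sq_add_sin_sq (x / 2)
  have h2 := Real.cos_two_mul (x / 2)
  rw [show 2 * (x / 2) = x by ring] at h2
  linarith

lemma pp_add_le (s t u : ℝ) : pp (s + t) u ≤ 2 * pp s u + 2 * pp t u := by
  rcases eq_or_ne u 0 with rfl | hu
  · simp only [pp_zero]; nlinarith [sq_nonneg (s - t)]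
  · rw [pp_eq _ hu, pp_eq _ hu, pp_eq _ hu]
    rw [← mul_div_assoc, ← mul_div_assoc, ← add_div]
    gcongr
    rw [one_sub_cos_eq, one_sub_cos_eq, one_sub_cos_eq]
    rw [show u * (s + t) / 2 = u * s / 2 + u * t / 2 by ring]
    set a := u * s / 2
    set b := u * t / 2
    rw [Real.sin_add]
    have h1 := Real.cos_sq_add_sin_sq a
    have h2 := Real.cos_sq_add_sin_sq b
    nlinarith [sq_nonneg (Real.sin a * Real.cos b - Real.cos a * Real.sin b),
      mul_nonneg (sq_nonneg (Real.sin a)) (sq_nonneg (Real.sin b)),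
      sq_nonneg (Real.sin a), sq_nonneg (Real.sin b)]

lemma abs_sin_nat_mul (n : ℕ) (x : ℝ) : |Real.sin (n * x)| ≤ n * |Real.sin x| := by
  induction n with
  | zero => simp
  | succ k ih =>
    push_cast
    rw [add_mul, one_mul, Real.sin_add]
    calc _ ≤ |Real.sin (k * x) * Real.cos x| + |Real.cos (k * x) * Real.sin x| := abs_add_le _ _
      _ ≤ |Real.sin (k * x)| * 1 + 1 * |Real.sin x| := by
        rw [abs_mul, abs_mul]
        gcongr
        · exact Real.abs_cos_le_one _
        · exact Real.abs_cos_le_one _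
      _ ≤ _ := by linarith

lemma pp_nat_mul_le (n : ℕ) (t u : ℝ) : pp (n * t) u ≤ n ^ 2 * pp t u := by
  rcases eq_or_ne u 0 with rfl | hu
  · simp only [pp_zero]; apply le_of_eq; ring
  · rw [pp_eq _ hu, pp_eq _ hu, ← mul_div_assoc]
    gcongr
    rw [one_sub_cos_eq, one_sub_cos_eq]
    have := abs_sin_nat_mul n (u * t / 2)
    rw [show u * (n * t) / 2 = n * (u * t / 2) by ring]
    have h2 := mul_self_le_mul_self (abs_nonneg _) this
    rw [abs_mul_abs_self] at h2
    have h3 := abs_mul_abs_self (Real.sin (u * t / 2))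
    nlinarith

noncomputable def GG (μ : Measure ℝ) (T : ℝ) : ℝ := 2 * ∫ b, pp T b ∂μ

section
variable (μ : Measure ℝ) [IsFiniteMeasure μ]

lemma pp_integrable (T : ℝ) : Integrable (pp T) μ := (kk_integrable μ T).const_mul _

lemma GG_eq (T : ℝ) : GG μ T = 2 * T ^ 2 * ∫ b, kk (b * T) ∂μ := by
  unfold GG pp; rw [integral_const_mul]; ring

lemma GG_cont : Continuous (GG μ) := by
  have : GG μ = fun T => 2 * T ^ 2 * ∫ b, kk (b * T) ∂μ := funext (GG_eq μ)
  rw [this]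
  have h : Continuous (fun T => ∫ b, kk (b * T) ∂μ) := by
    apply continuous_of_dominated (bound := fun _ => 1 / 2)
    · intro T; exact (kk_integrable μ T).aestronglyMeasurable
    · intro T; filter_upwards with b
      rw [Real.norm_of_nonneg (kk_nonneg _)]; exact kk_le _
    · exact integrable_const _
    · filter_upwards with b
      have := kk_cont; fun_prop
  fun_prop

lemma GG_nonneg (T : ℝ) : 0 ≤ GG μ T :=
  mul_nonneg zero_le_two (integral_nonneg (pp_nonneg T))

lemma GG_neg (T : ℝ) : GG μ (-T) = GG μ T := by
  unfold GG; simp_rw [pp_neg]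

lemma GG_abs (T : ℝ) : GG μ |T| = GG μ T := by
  rcases abs_choice T with h | h <;> rw [h]
  rw [GG_neg]

lemma GG_add_le (s t : ℝ) : GG μ (s + t) ≤ 2 * GG μ s + 2 * GG μ t := by
  unfold GG
  have : ∫ b, pp (s + t) b ∂μ ≤ ∫ b, (2 * pp s b + 2 * pp t b) ∂μ :=
    integral_mono (pp_integrable μ _) (((pp_integrable μ _).const_mul _).add
      ((pp_integrable μ _).const_mul _)) (pp_add_le s t)
  rw [integral_add ((pp_integrable μ _).const_mul _) ((pp_integrable μ _).const_mul _),
    integral_const_mul, integral_const_mul] at this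
  linarith

lemma GG_nat_mul_le (n : ℕ) (t : ℝ) : GG μ (n * t) ≤ n ^ 2 * GG μ t := by
  unfold GG
  have : ∫ b, pp (n * t) b ∂μ ≤ ∫ b, (n ^ 2 * pp t b) ∂μ :=
    integral_mono (pp_integrable μ _) ((pp_integrable μ _).const_mul _) (pp_nat_mul_le n t)
  rw [integral_const_mul] at this
  linarith

theorem GG_bound (α : ℝ) (hα : 0 < α) (hpos : ∀ᶠ T in atTop, 0 < GG μ T)
    (hrv : ∀ s > 0, Tendsto (fun T => GG μ (s * T) / GG μ T) atTop (𝓝 (s ^ α))) :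
    ∃ C : ℝ, ∀ᶠ T in atTop, ∀ l : ℝ, GG μ (l * T) ≤ C * (1 + l ^ 2) * GG μ T := by
  let E : ℕ → Set ℝ := fun n => {s | ∀ T : ℝ, (n:ℝ) ≤ T → GG μ (s * T) ≤ n * GG μ T}
  have hcl : ∀ n, IsClosed (E n) := by
    intro n
    have : E n = ⋂ T : ℝ, ⋂ _ : (n:ℝ) ≤ T, {s | GG μ (s * T) ≤ n * GG μ T} := by
      ext s; simp [E]
    rw [this]
    refine isClosed_iInter fun T => isClosed_iInter fun _ => ?_
    have := GG_cont μ
    exact isClosed_le (by fun_prop) continuous_const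
  have hun : ⋃ n, E n = univ := by
    rw [eq_univ_iff_forall]
    intro s
    have key : ∀ s : ℝ, 0 ≤ s → ∃ n, s ∈ E n := by
      intro s hs
      rcases hs.eq_or_lt with rfl | hs
      · refine ⟨0, fun T hT => ?_⟩
        simp [GG_eq]
      · have h1 := (hrv s hs).eventually_lt_const (lt_add_one (s ^ α))
        obtain ⟨T0, hT0⟩ := eventually_atTop.1 (h1.and hpos)
        refine ⟨⌈max T0 (s ^ α + 1)⌉₊, fun T hT => ?_⟩
        have h2 : max T0 (s ^ α + 1) ≤ T := (Nat.le_ceil _).trans hT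
        obtain ⟨h3, h4⟩ := hT0 T ((le_max_left _ _).trans h2)
        rw [div_lt_iff₀ h4] at h3
        refine h3.le.trans ?_
        gcongr
        exact (le_max_right _ _).trans (Nat.le_ceil _)
    obtain ⟨n, hn⟩ := key |s| (abs_nonneg s)
    rw [mem_iUnion]
    refine ⟨n, fun T hT => ?_⟩
    have := hn T hT
    have hT' : 0 ≤ T := (Nat.cast_nonneg n).trans hT
    rwa [← abs_of_nonneg hT', ← abs_mul, GG_abs, abs_of_nonneg hT'] at this
  obtain ⟨n, c, hc⟩ := nonempty_interior_of_iUnion_of_closed hcl hun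
  rw [mem_interior_iff_mem_nhds, Metric.mem_nhds_iff] at hc
  obtain ⟨r, hr, hball⟩ := hc
  have hsmall : ∀ s : ℝ, |s| < r → ∀ T : ℝ, (n:ℝ) ≤ T → GG μ (s * T) ≤ 4 * n * GG μ T := by
    intro s hs T hT
    have h1 := hball (show c + s ∈ Metric.ball c r by simpa [Real.dist_eq] using hs) T hT
    have h2 := hball (show c ∈ Metric.ball c r by simpa using hr) T hT
    have h3 := GG_add_le μ ((c + s) * T) (-(c * T))
    rw [GG_neg] at h3
    rw [show (c + s) * T + -(c * T) = s * T by ring] at h3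
    linarith
  refine ⟨4 * n * (8 + 2 / r ^ 2), ?_⟩
  filter_upwards [eventually_ge_atTop (n:ℝ)] with T hT l
  set k : ℕ := ⌈|l| / r⌉₊ + 1 with hk
  have hk0 : (0:ℝ) < k := by positivity
  have hk1 : |l| / r < k := by rw [hk]; push_cast; linarith [Nat.le_ceil (|l| / r)]
  have hk2 : (k:ℝ) ≤ |l| / r + 2 := by
    rw [hk]; push_cast; linarith [Nat.ceil_lt_add_one (show 0 ≤ |l| / r by positivity)]
  have h1 := GG_nat_mul_le μ k (l / k * T)
  rw [show (k:ℝ) * (l / k * T) = l * T by field_simp] at h1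
  have h2 := hsmall (l / k) (by
    rw [abs_div, abs_of_pos hk0, div_lt_iff₀ hk0]
    rw [div_lt_iff₀ hr] at hk1; linarith) T hT
  have h4 : (k:ℝ) ^ 2 ≤ (8 + 2 / r ^ 2) * (1 + l ^ 2) := by
    have : (k:ℝ) ^ 2 ≤ (|l| / r + 2) ^ 2 := by gcongr
    have h5 : (|l| / r) ^ 2 = l ^ 2 / r ^ 2 := by rw [div_pow, sq_abs]
    have h6 : (8 + 2 / r ^ 2) * (1 + l ^ 2) = 8 + 8 * l ^ 2 + 2 / r ^ 2 + 2 * (l ^ 2 / r ^ 2) := by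
      ring
    rw [h6, ← h5]
    have : 0 ≤ 2 / r ^ 2 := by positivity
    nlinarith [sq_nonneg (|l| / r - 2), sq_nonneg l]
  have hG := GG_nonneg μ T
  calc GG μ (l * T) ≤ k ^ 2 * GG μ (l / k * T) := h1
    _ ≤ k ^ 2 * (4 * n * GG μ T) := by gcongr
    _ ≤ ((8 + 2 / r ^ 2) * (1 + l ^ 2)) * (4 * n * GG μ T) := by gcongr
    _ = _ := by ring

end

end RV


namespace RV

lemma pp_bound (t u : ℝ) : pp t u ≤ (2 + t ^ 2) * (1 / (1 + u ^ 2)) := by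
  rw [mul_one_div, le_div_iff₀ (by positivity)]
  have h1 : pp t u ≤ t ^ 2 := by
    unfold pp; nlinarith [kk_le (u * t), sq_nonneg t]
  have h2 : pp t u * u ^ 2 ≤ 2 := by
    rcases eq_or_ne u 0 with rfl | hu
    · simp
    · rw [pp_eq _ hu, div_mul_cancel₀ _ (by positivity)]
      linarith [Real.neg_one_le_cos (u * t)]
  linarith

lemma exp_sq_int : IntegrableOn (fun s : ℝ => Real.exp (-s) * (2 + s ^ 2)) (Ioi 0) := by
  have h1 := Real.GammaIntegral_convergent (s := 1) (by norm_num)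
  have h3 := Real.GammaIntegral_convergent (s := 3) (by norm_num)
  have h4 : IntegrableOn (fun s : ℝ => 2 * (Real.exp (-s) * s ^ ((1:ℝ) - 1))
      + Real.exp (-s) * s ^ ((3:ℝ) - 1)) (Ioi 0) := (h1.const_mul 2).add h3
  refine h4.congr_fun (fun s hs => ?_) measurableSet_Ioi
  norm_num
  ring

lemma exp_pp_int (u : ℝ) : ∫ s in Ioi 0, Real.exp (-s) * pp s u = 1 / (1 + u ^ 2) := by
  rcases eq_or_ne u 0 with rfl | hu
  · simp_rw [pp_zero]
    have h3 := Real.Gamma_eq_integral (s := 3) (by norm_num)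
    have : Real.Gamma 3 = 2 := by
      have := Real.Gamma_nat_eq_factorial 2
      rw [show ((2:ℕ):ℝ) + 1 = 3 by norm_num] at this
      rw [this]; norm_num [Nat.factorial]
    rw [this] at h3
    have e : ∫ s in Ioi (0:ℝ), Real.exp (-s) * (s ^ 2 / 2)
        = (∫ s in Ioi (0:ℝ), Real.exp (-s) * s ^ ((3:ℝ) - 1)) / 2 := by
      rw [← integral_div]
      refine setIntegral_congr_fun measurableSet_Ioi fun s hs => ?_
      norm_num
      ring
    rw [e, ← h3]; norm_num
  · have a := exp_int 1 one_pos
    have b := exp_cos 1 u one_pos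
    have e : ∀ s : ℝ, Real.exp (-s) * pp s u
        = (Real.exp (-(1 * s)) - Real.exp (-(1 * s)) * Real.cos (u * s)) / u ^ 2 := by
      intro s; rw [pp_eq _ hu, one_mul]; ring
    simp_rw [e]
    rw [integral_div, integral_sub a.1 b.1, a.2, b.2]
    field_simp
    ring

noncomputable def DD (m : Measure ℝ) (t : ℝ) : ℝ := ∫ u, pp t u ∂m

lemma pp_int_of (m : Measure ℝ) (hm : Integrable (fun u : ℝ => 1 / (1 + u ^ 2)) m) (t : ℝ) :
    Integrable (pp t) m := by
  refine (hm.const_mul (2 + t ^ 2)).mono' ?_ ?_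
  · exact (pp_cont2.comp (by fun_prop : Continuous fun u : ℝ => (t, u))).aestronglyMeasurable
  · filter_upwards with u
    rw [Real.norm_of_nonneg (pp_nonneg _ _)]
    exact pp_bound t u

lemma pp_bracket (l s u : ℝ) :
    pp (l + s) u / 2 + pp (l - s) u / 2 - pp l u = Real.cos (l * u) * pp s u := by
  rcases eq_or_ne u 0 with rfl | hu
  · simp [pp_zero]; ring
  · simp only [pp_eq _ hu]
    rw [show u * (l + s) = l * u + u * s by ring, show u * (l - s) = l * u - u * s by ring,
      Real.cos_add, Real.cos_sub, show u * l = l * u by ring]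
    field_simp
    ring

theorem fub (m : Measure ℝ) [SFinite m] (hm : Integrable (fun u : ℝ => 1 / (1 + u ^ 2)) m)
    (l : ℝ) :
    ∫ u, Real.cos (l * u) * (1 / (1 + u ^ 2)) ∂m
      = ∫ s in Ioi 0, Real.exp (-s) * (DD m (l + s) / 2 + DD m (l - s) / 2 - DD m l) := by
  have e1 : ∀ s : ℝ, Real.exp (-s) * (DD m (l + s) / 2 + DD m (l - s) / 2 - DD m l)
      = ∫ u, Real.cos (l * u) * (Real.exp (-s) * pp s u) ∂m := by
    intro s
    unfold DD
    have hadd : Integrable (fun u => pp (l + s) u / 2 + pp (l - s) u / 2) m :=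
      ((pp_int_of m hm _).div_const _).add ((pp_int_of m hm _).div_const _)
    rw [← integral_div, ← integral_div, ← integral_add ((pp_int_of m hm _).div_const _)
      ((pp_int_of m hm _).div_const _), ← integral_sub hadd (pp_int_of m hm _), ← integral_const_mul]
    congr 1; ext u
    rw [pp_bracket]; ring
  simp_rw [e1]
  rw [integral_integral_swap]
  · congr 1; ext u
    rw [integral_const_mul, exp_pp_int]
  · refine (Integrable.mul_prod exp_sq_int hm).mono' ?_ ?_
    · have := pp_cont2
      apply Continuous.aestronglyMeasurable
      simp only [Function.uncurry_def]
      fun_prop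
    · filter_upwards with ⟨s, u⟩
      simp only [Function.uncurry]
      rw [norm_mul, norm_mul, Real.norm_of_nonneg (pp_nonneg _ _),
        Real.norm_of_nonneg (Real.exp_pos _).le, mul_assoc]
      calc _ ≤ 1 * (Real.exp (-s) * ((2 + s ^ 2) * (1 / (1 + u ^ 2)))) := by
            gcongr
            · exact mul_nonneg (Real.exp_pos _).le (pp_nonneg _ _)
            · exact Real.abs_cos_le_one _
            · exact pp_bound s u
        _ = _ := by ring

/-- dominated passage to the limit -/
theorem fub_lim {ι : Type*} (F : Filter ι) [F.IsCountablyGenerated]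
    (D : ι → ℝ → ℝ) (D0 : ℝ → ℝ) (C : ℝ)
    (hmeas : ∀ T, Continuous (D T))
    (hb : ∀ᶠ T in F, ∀ l, |D T l| ≤ C * (1 + l ^ 2))
    (hlim : ∀ l, Tendsto (fun T => D T l) F (𝓝 (D0 l))) (l : ℝ) :
    Tendsto (fun T => ∫ s in Ioi 0, Real.exp (-s) * (D T (l + s) / 2 + D T (l - s) / 2 - D T l)) F
      (𝓝 (∫ s in Ioi 0, Real.exp (-s) * (D0 (l + s) / 2 + D0 (l - s) / 2 - D0 l))) := by
  apply tendsto_integral_filter_of_dominated_convergence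
    (fun s => (C * (2 + 2 * l ^ 2)) * (Real.exp (-s) * (2 + s ^ 2)))
  · filter_upwards with T
    have := hmeas T
    apply Continuous.aestronglyMeasurable
    fun_prop
  · filter_upwards [hb] with T hT
    filter_upwards with s
    have h1 := abs_le.1 (hT (l + s))
    have h2 := abs_le.1 (hT (l - s))
    have h3 := abs_le.1 (hT l)
    have hC : 0 ≤ C := by
      have := (abs_nonneg _).trans (hT 0); simpa using this
    rw [norm_mul, Real.norm_of_nonneg (Real.exp_pos _).le,
      show (C * (2 + 2 * l ^ 2)) * (Real.exp (-s) * (2 + s ^ 2))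
        = Real.exp (-s) * (C * ((2 + 2 * l ^ 2) * (2 + s ^ 2))) by ring]
    gcongr
    have h4 : C * (1 + (l + s) ^ 2) / 2 + C * (1 + (l - s) ^ 2) / 2 + C * (1 + l ^ 2)
        ≤ C * ((2 + 2 * l ^ 2) * (2 + s ^ 2)) := by
      rw [show C * (1 + (l + s) ^ 2) / 2 + C * (1 + (l - s) ^ 2) / 2 + C * (1 + l ^ 2)
        = C * (2 + 2 * l ^ 2 + s ^ 2) by ring]
      gcongr
      nlinarith [mul_nonneg (sq_nonneg l) (sq_nonneg s), sq_nonneg l, sq_nonneg s]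
    rw [Real.norm_eq_abs, abs_le]
    constructor <;> linarith [h1.1, h1.2, h2.1, h2.2, h3.1, h3.2]
  · exact exp_sq_int.const_mul _
  · filter_upwards with s
    exact ((((hlim _).div_const 2).add ((hlim _).div_const 2)).sub (hlim _)).const_mul _

end RV


namespace RV

noncomputable def wd (m : Measure ℝ) (w : ℝ → ℝ) : Measure ℝ :=
  m.withDensity (fun u => ENNReal.ofReal (w u))

lemma int_wd {E : Type*} [NormedAddCommGroup E] [NormedSpace ℝ E] (m : Measure ℝ) (w : ℝ → ℝ)
    (hw : Measurable w) (hw0 : ∀ u, 0 ≤ w u) (f : ℝ → E) :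
    ∫ u, f u ∂(wd m w) = ∫ u, w u • f u ∂m := by
  unfold wd
  rw [integral_withDensity_eq_integral_toReal_smul (by fun_prop) (by simp)]
  simp_rw [ENNReal.toReal_ofReal (hw0 _)]

lemma wd_finite (m : Measure ℝ) (w : ℝ → ℝ) (hw : Integrable w m) : IsFiniteMeasure (wd m w) :=
  isFiniteMeasure_withDensity_ofReal hw.2

def Sym (m : Measure ℝ) : Prop := ∀ f : ℝ → ℝ, ∫ u, f (-u) ∂m = ∫ u, f u ∂m

lemma charFun_sym (m : Measure ℝ) (hs : Sym m) (w : ℝ → ℝ) (hw : Continuous w)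
    (hw0 : ∀ u, 0 ≤ w u) (hev : ∀ u, w (-u) = w u) (hi : Integrable w m) (l : ℝ) :
    charFun (wd m w) l = ((∫ u, Real.cos (l * u) * w u ∂m : ℝ) : ℂ) := by
  have hsin : ∫ u, Real.sin (l * u) * w u ∂m = 0 := by
    have := hs (fun u => Real.sin (l * u) * w u)
    simp only [hev, mul_neg, Real.sin_neg, neg_mul, integral_neg] at this
    linarith
  have hc : Integrable (fun u => Real.cos (l * u) * w u) m := by
    refine hi.bdd_mul (c := 1) (by fun_prop) ?_
    filter_upwards with u using Real.abs_cos_le_one _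
  have hsi : Integrable (fun u => Real.sin (l * u) * w u) m := by
    refine hi.bdd_mul (c := 1) (by fun_prop) ?_
    filter_upwards with u using Real.abs_sin_le_one _
  rw [charFun_apply_real, int_wd m w hw.measurable hw0]
  have e : ∀ u : ℝ, w u • Complex.exp (l * u * Complex.I)
      = ((Real.cos (l * u) * w u : ℝ) : ℂ) + ((Real.sin (l * u) * w u : ℝ) : ℂ) * Complex.I := by
    intro u
    rw [Complex.exp_mul_I, Complex.real_smul]
    push_cast
    ring
  simp_rw [e]
  rw [integral_add hc.ofReal (hsi.ofReal.mul_const _), integral_mul_const, integral_complex_ofReal,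
    integral_complex_ofReal, hsin]
  simp

lemma levy_finite (F : ℕ → FiniteMeasure ℝ) (F0 : FiniteMeasure ℝ) (hne : F0 ≠ 0)
    (h : ∀ l : ℝ, Tendsto (fun n => charFun (F n : Measure ℝ) l) atTop
      (𝓝 (charFun (F0 : Measure ℝ) l))) : Tendsto F atTop (𝓝 F0) := by
  have hmne : F0.mass ≠ 0 := by rwa [Ne, FiniteMeasure.mass_zero_iff]
  have cz : ∀ G : FiniteMeasure ℝ, charFun (G : Measure ℝ) 0 = ((G.mass : ℝ) : ℂ) := by
    intro G; rw [charFun_zero]; rfl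
  have hmass : Tendsto (fun n => (F n).mass) atTop (𝓝 F0.mass) := by
    have := h 0
    simp only [cz] at this
    have h2 := (Complex.continuous_re.tendsto _).comp this
    simp only [Function.comp_def, Complex.ofReal_re] at h2
    exact_mod_cast h2
  refine (FiniteMeasure.tendsto_normalize_iff_tendsto hne).1 ⟨?_, hmass⟩
  apply ProbabilityMeasure.tendsto_of_tendsto_charFun
  intro l
  have cn : ∀ G : FiniteMeasure ℝ, G ≠ 0 →
      charFun (G.normalize : Measure ℝ) l = ((G.mass : ℝ) : ℂ)⁻¹ * charFun (G : Measure ℝ) l := by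
    intro G hG
    rw [charFun_apply_real, charFun_apply_real, FiniteMeasure.toMeasure_normalize_eq_of_nonzero _ hG,
      integral_smul_nnreal_measure, NNReal.smul_def, Complex.real_smul]
    push_cast
    rfl
  rw [cn F0 hne]
  have hmc : Tendsto (fun n => (((F n).mass : ℝ) : ℂ)) atTop (𝓝 ((F0.mass : ℝ) : ℂ)) := by
    have := h 0
    simpa only [cz] using this
  refine ((hmc.inv₀ (by exact_mod_cast hmne)).mul (h l)).congr' ?_
  filter_upwards [hmass.eventually_ne hmne] with n hn
  rw [cn]
  rwa [Ne, ← FiniteMeasure.mass_zero_iff]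

lemma levy_finite_real (F : ℝ → FiniteMeasure ℝ) (F0 : FiniteMeasure ℝ) (hne : F0 ≠ 0)
    (h : ∀ l : ℝ, Tendsto (fun T => charFun (F T : Measure ℝ) l) atTop
      (𝓝 (charFun (F0 : Measure ℝ) l))) : Tendsto F atTop (𝓝 F0) := by
  apply tendsto_of_seq_tendsto
  intro u hu
  exact levy_finite _ F0 hne (fun l => (h l).comp hu)

lemma portmanteau_finite (F : ℝ → FiniteMeasure ℝ) (F0 : FiniteMeasure ℝ) (hne : F0 ≠ 0)
    (h : Tendsto F atTop (𝓝 F0)) (E : Set ℝ) (hE : (F0 : Measure ℝ) (frontier E) = 0) :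
    Tendsto (fun T => (F T : Measure ℝ).real E) atTop (𝓝 ((F0 : Measure ℝ).real E)) := by
  obtain ⟨h1, h2⟩ := (FiniteMeasure.tendsto_normalize_iff_tendsto hne).2 h
  have h3 := ProbabilityMeasure.tendsto_measure_of_null_frontier_of_tendsto h1 (E := E) (by
    rw [FiniteMeasure.normalize_eq_of_nonzero _ hne]
    have : F0 (frontier E) = 0 := by
      rw [FiniteMeasure.coeFn_def]; simp [hE]
    rw [this, mul_zero])
  have h4 := h2.mul h3
  simp only [← FiniteMeasure.self_eq_mass_mul_normalize] at h4
  exact NNReal.tendsto_coe.2 h4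

theorem taub (m : ℝ → Measure ℝ) (m0 : Measure ℝ) [∀ T, SFinite (m T)] [SFinite m0]
    (hm : ∀ T, Integrable (fun u : ℝ => 1 / (1 + u ^ 2)) (m T))
    (hm0 : Integrable (fun u : ℝ => 1 / (1 + u ^ 2)) m0)
    (hs : ∀ T, Sym (m T)) (hs0 : Sym m0) (hne : m0 ≠ 0) (C : ℝ)
    (hcont : ∀ T, Continuous (DD (m T)))
    (hb : ∀ᶠ T in atTop, ∀ l, |DD (m T) l| ≤ C * (1 + l ^ 2))
    (hlim : ∀ l, Tendsto (fun T => DD (m T) l) atTop (𝓝 (DD m0 l)))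
    (hfr : m0 {-1, 1} = 0) :
    Tendsto (fun T => (m T).real (Icc (-1) 1)) atTop (𝓝 (m0.real (Icc (-1) 1))) := by
  set w : ℝ → ℝ := fun u => 1 / (1 + u ^ 2) with hw
  have hwc : Continuous w := by
    rw [hw]; exact continuous_const.div (by fun_prop) (fun u => by positivity)
  have hw0 : ∀ u, 0 ≤ w u := fun u => by rw [hw]; positivity
  have hwpos : ∀ u, 0 < w u := fun u => by rw [hw]; positivity
  let v : ℝ → ℝ := fun u => min 1 (2 * w u)
  have hvc : Continuous v := by fun_prop
  have hv0 : ∀ u, 0 ≤ v u := fun u => le_min zero_le_one (mul_nonneg zero_le_two (hw0 u))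
  have hvle : ∀ u, v u ≤ 2 * w u := fun u => min_le_right _ _
  have hvi : ∀ q : Measure ℝ, Integrable w q → Integrable v q := by
    intro q hq
    refine (hq.const_mul 2).mono' hvc.aestronglyMeasurable ?_
    filter_upwards with u
    rw [Real.norm_of_nonneg (hv0 u)]; exact hvle u
  have hvpos : ∀ u, 0 < v u := fun u => lt_min one_pos (mul_pos two_pos (hwpos u))
  have wdne : ∀ x : ℝ → ℝ, Continuous x → (∀ u, 0 < x u) → wd m0 x ≠ 0 := by
    intro x hx hxp h
    apply hne
    unfold wd at h
    rw [withDensity_eq_zero_iff (by fun_prop)] at h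
    rw [← Measure.measure_univ_eq_zero]
    have : ∀ᵐ u ∂m0, False := by
      filter_upwards [h] with u hu
      simp at hu
      linarith [hxp u]
    simpa [ae_iff] using this
  let W : ℝ → FiniteMeasure ℝ := fun T => ⟨wd (m T) w, wd_finite _ _ (hm T)⟩
  let W0 : FiniteMeasure ℝ := ⟨wd m0 w, wd_finite _ _ hm0⟩
  let V : ℝ → FiniteMeasure ℝ := fun T => ⟨wd (m T) v, wd_finite _ _ (hvi _ (hm T))⟩
  let V0 : FiniteMeasure ℝ := ⟨wd m0 v, wd_finite _ _ (hvi _ hm0)⟩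
  have hW : Tendsto W atTop (𝓝 W0) := by
    apply levy_finite_real
    · intro h
      exact wdne w hwc hwpos (congrArg Subtype.val h)
    · intro l
      have hev : ∀ u, w (-u) = w u := fun u => by simp [hw]
      change Tendsto (fun T => charFun (wd (m T) w) l) atTop (𝓝 (charFun (wd m0 w) l))
      rw [charFun_sym m0 hs0 w hwc hw0 hev hm0]
      simp_rw [fun T => charFun_sym (m T) (hs T) w hwc hw0 hev (hm T)]
      refine (Complex.continuous_ofReal.tendsto _).comp ?_
      rw [hw, fub m0 hm0]
      simp_rw [fun T => fub (m T) (hm T)]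
      exact fub_lim atTop (fun T => DD (m T)) (DD m0) C hcont hb hlim l
  have hV : Tendsto V atTop (𝓝 V0) := by
    rw [FiniteMeasure.tendsto_iff_forall_integral_tendsto] at hW ⊢
    intro f
    let g : ℝ → ℝ := fun u => min (1 + u ^ 2) 2
    let gb : ℝ →ᵇ ℝ := BoundedContinuousFunction.ofNormedAddCommGroup g (by fun_prop) 2 (by
      intro u
      rw [Real.norm_of_nonneg (le_min (by positivity) zero_le_two)]
      exact min_le_right _ _)
    have e : ∀ q : Measure ℝ, ∫ u, f u ∂(wd q v) = ∫ u, (gb * f) u ∂(wd q w) := by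
      intro q
      rw [int_wd q v hvc.measurable hv0, int_wd q w hwc.measurable hw0]
      congr 1; ext u
      have : v u = w u * g u := by
        simp only [v, g]
        rw [mul_min_of_nonneg _ _ (hw0 u)]
        congr 1
        · rw [hw]; field_simp
        · ring
      change v u * f u = w u * (g u * f u)
      rw [this]; ring
    have := hW (gb * f)
    change Tendsto (fun T => ∫ u, f u ∂(wd (m T) v)) atTop (𝓝 (∫ u, f u ∂(wd m0 v)))
    rw [e]
    simp_rw [e]
    exact this
  have hVm : ∀ q : Measure ℝ, (wd q v).real (Icc (-1) 1) = q.real (Icc (-1) 1) := by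
    intro q
    unfold wd Measure.real
    rw [withDensity_apply _ measurableSet_Icc, setLIntegral_congr_fun (g := fun _ => 1)
      measurableSet_Icc]
    · simp
    · intro u hu
      have : v u = 1 := by
        apply min_eq_left
        simp only [hw]
        rw [mul_one_div, le_div_iff₀ (by positivity)]
        nlinarith [hu.1, hu.2]
      simp [this]
  have := portmanteau_finite V V0 (fun h => wdne v hvc hvpos (congrArg Subtype.val h)) hV
    (Icc (-1) 1) (by
      rw [frontier_Icc (by norm_num)]
      exact (withDensity_absolutelyContinuous _ _) hfr)
  change Tendsto (fun T => (wd (m T) v).real _) atTop (𝓝 ((wd m0 v).real _)) at this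
  simpa only [hVm] using this

end RV


namespace RV

noncomputable def II (α : ℝ) : ℝ := ∫ u in Ioi (0:ℝ), (1 - Real.cos u) * u ^ (-1 - α)

noncomputable def ww (α : ℝ) (u : ℝ) : ℝ := 1 / (2 * II α) * |u| ^ (1 - α)

noncomputable def Lm (α : ℝ) : Measure ℝ := wd volume (ww α)

instance (α : ℝ) : SFinite (Lm α) := by unfold Lm wd; infer_instance

lemma II_pos {α : ℝ} (h0 : 0 < α) (h2 : α < 2) : 0 < II α := I_pos α h0 h2

lemma ww_nonneg {α : ℝ} (h0 : 0 < α) (h2 : α < 2) (u : ℝ) : 0 ≤ ww α u := by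
  have := II_pos h0 h2
  unfold ww; positivity

lemma ww_meas (α : ℝ) : Measurable (ww α) := by unfold ww; fun_prop

lemma Lm_sym {α : ℝ} (h0 : 0 < α) (h2 : α < 2) : Sym (Lm α) := by
  intro f
  unfold Lm
  rw [int_wd _ _ (ww_meas α) (ww_nonneg h0 h2), int_wd _ _ (ww_meas α) (ww_nonneg h0 h2),
    ← integral_neg_eq_self (fun u => ww α u • f u)]
  simp [ww]

lemma Lm_int {α : ℝ} (h0 : 0 < α) (h2 : α < 2) :
    Integrable (fun u : ℝ => 1 / (1 + u ^ 2)) (Lm α) := by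
  unfold Lm wd
  rw [integrable_withDensity_iff (by have := ww_meas α; fun_prop) (by simp)]
  simp_rw [ENNReal.toReal_ofReal (ww_nonneg h0 h2 _)]
  have hb := beta_int (2 - α) (by linarith) (by linarith)
  have hs := sin_pos' (2 - α) (by linarith) (by linarith)
  have : Integrable (fun u : ℝ => |u| ^ (1 - α) / (1 + |u| ^ 2)) := by
    by_contra hni
    have h1 := integral_undef hni
    rw [integral_comp_abs (f := fun u : ℝ => u ^ (1 - α) / (1 + u ^ 2))] at h1
    rw [show 2 - α - 1 = 1 - α by ring] at hb
    rw [hb] at h1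
    have := Real.pi_pos
    have : 0 < 2 * (Real.pi / (2 * Real.sin ((2 - α) * Real.pi / 2))) := by positivity
    linarith
  refine (this.const_mul (1 / (2 * II α))).congr ?_
  filter_upwards with u
  simp only [ww, sq_abs]
  ring

lemma II_scale {α : ℝ} {l : ℝ} (hl : 0 < l) :
    ∫ u in Ioi (0:ℝ), u ^ (1 - α) * pp l u = l ^ α * II α := by
  have h := integral_comp_mul_left_Ioi (fun u : ℝ => (1 - Real.cos u) * u ^ (-1 - α)) 0 hl
  rw [mul_zero] at h
  have e : ∫ u in Ioi (0:ℝ), u ^ (1 - α) * pp l u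
      = ∫ u in Ioi (0:ℝ), l ^ (1 + α) * ((1 - Real.cos (l * u)) * (l * u) ^ (-1 - α)) := by
    refine setIntegral_congr_fun measurableSet_Ioi fun u hu => ?_
    have hu : 0 < u := hu
    rw [pp_eq _ hu.ne', Real.mul_rpow hl.le hu.le, show 1 - α = (-1 - α) + 2 by ring,
      Real.rpow_add hu, show -1 - α = -(1 + α) by ring, Real.rpow_neg hl.le, Real.rpow_two,
      mul_comm u l]
    have : 0 < l ^ (1 + α) := by positivity
    field_simp
  rw [e, integral_const_mul, h, smul_eq_mul, Real.rpow_add hl, Real.rpow_one]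
  unfold II
  field_simp

lemma DD_Lm {α : ℝ} (h0 : 0 < α) (h2 : α < 2) (l : ℝ) : DD (Lm α) l = |l| ^ α := by
  have hI := II_pos h0 h2
  have habs : pp l = pp |l| := by
    ext u
    rcases abs_choice l with h | h <;> rw [h]
    rw [pp_neg]
  unfold DD
  rw [habs]
  rcases eq_or_ne l 0 with rfl | hl
  · simp [pp, Real.zero_rpow h0.ne']
  have hl' : 0 < |l| := abs_pos.2 hl
  unfold Lm
  rw [int_wd _ _ (ww_meas α) (ww_nonneg h0 h2)]
  have e : ∀ u, ww α u • pp |l| u = 1 / (2 * II α) * ((fun v => v ^ (1 - α) * pp |l| v) |u|) := by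
    intro u
    simp only [ww, smul_eq_mul]
    have : pp |l| |u| = pp |l| u := by
      rcases abs_choice u with h | h <;> rw [h]
      rw [pp_neg']
    rw [this]; ring
  simp_rw [e]
  rw [integral_const_mul, integral_comp_abs (f := fun v => v ^ (1 - α) * pp |l| v), II_scale hl']
  field_simp

lemma Lm_Icc {α : ℝ} (h0 : 0 < α) (h2 : α < 2) :
    (Lm α).real (Icc (-1) 1) = 1 / ((2 - α) * II α) := by
  have hI := II_pos h0 h2
  have hβ : 0 < 2 - α := by linarith
  have e1 : (Lm α).real (Icc (-1) 1) = ∫ u, (Icc (-1:ℝ) 1).indicator (fun _ => (1:ℝ)) u ∂(Lm α) := by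
    rw [integral_indicator measurableSet_Icc]; simp
  rw [e1]
  unfold Lm
  rw [int_wd _ _ (ww_meas α) (ww_nonneg h0 h2)]
  let f : ℝ → ℝ := (Iic (1:ℝ)).indicator (fun v => v ^ (1 - α))
  have e : ∀ u, ww α u • (Icc (-1:ℝ) 1).indicator (fun _ => (1:ℝ)) u
      = 1 / (2 * II α) * f |u| := by
    intro u
    simp only [ww, f, indicator, mem_Icc, mem_Iic, abs_le]
    split_ifs <;> simp
  simp_rw [e]
  rw [integral_const_mul, integral_comp_abs (f := f)]
  have e2 : ∫ u in Ioi (0:ℝ), f u = 1 / (2 - α) := by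
    simp only [f]
    rw [setIntegral_indicator measurableSet_Iic]
    have := (rpow_int (2 - α) 1 hβ zero_le_one).2
    rw [integral_const_mul, Real.one_rpow, show 2 - α - 1 = 1 - α by ring] at this
    rw [Ioi_inter_Iic]
    field_simp
    linarith
  rw [e2]
  field_simp

lemma GG_zero (μ : Measure ℝ) : GG μ 0 = 0 := by simp [GG, pp]

theorem tauberian (μ : Measure ℝ) [IsFiniteMeasure μ] (hsym : μ.map (fun u => -u) = μ)
    (α : ℝ) (h0 : 0 < α) (h2 : α < 2) (hpos : ∀ᶠ T in atTop, 0 < GG μ T)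
    (hrv : ∀ s > 0, Tendsto (fun T => GG μ (s * T) / GG μ T) atTop (𝓝 (s ^ α))) :
    Tendsto (fun T => 2 * T ^ 2 / GG μ T * MM μ (1 / T)) atTop (𝓝 (1 / ((2 - α) * II α))) := by
  have hI := II_pos h0 h2
  have hβ : 0 < 2 - α := by linarith
  obtain ⟨C, hC⟩ := GG_bound μ α h0 hpos hrv
  let m : ℝ → Measure ℝ := fun T => ENNReal.ofReal (2 * T ^ 2 / GG μ T) • μ.map (fun b => b * T)
  have hc0 : ∀ T, 0 ≤ 2 * T ^ 2 / GG μ T := fun T => by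
    have := GG_nonneg μ T; positivity
  haveI : ∀ T, IsFiniteMeasure (m T) := by
    intro T
    haveI : IsFiniteMeasure (μ.map (fun b => b * T)) := inferInstance
    exact Measure.smul_finite _ (by simp)
  have hInt0 : ∀ T (f : ℝ → ℝ), Measurable f →
      ∫ u, f u ∂(m T) = 2 * T ^ 2 / GG μ T * ∫ b, f (b * T) ∂μ := by
    intro T f hf
    simp only [m]
    rw [integral_smul_measure, integral_map (by fun_prop) hf.aestronglyMeasurable,
      ENNReal.toReal_ofReal (hc0 T), smul_eq_mul]
  have hD : ∀ T l, DD (m T) l = GG μ (l * T) / GG μ T := by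
    intro T l
    unfold DD
    rw [hInt0 T (pp l) (pp_cont2.comp (by fun_prop : Continuous fun u : ℝ => (l, u))).measurable]
    rw [show GG μ (l * T) = 2 * ∫ b, pp (l * T) b ∂μ from rfl]
    have : ∫ b, pp (l * T) b ∂μ = T ^ 2 * ∫ b, pp l (b * T) ∂μ := by
      rw [← integral_const_mul]
      congr 1; ext b
      unfold pp
      rw [show b * (l * T) = b * T * l by ring]; ring
    rw [this]; ring
  have key := taub m (Lm α) ?_ (Lm_int h0 h2) ?_ (Lm_sym h0 h2) ?_ C ?_ ?_ ?_ ?_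
  · rw [Lm_Icc h0 h2] at key
    refine key.congr' ?_
    filter_upwards [eventually_gt_atTop 0] with T hT
    simp only [m, Measure.real, Measure.smul_apply, smul_eq_mul, ENNReal.toReal_mul,
      ENNReal.toReal_ofReal (hc0 T), MM]
    rw [Measure.map_apply (by fun_prop) measurableSet_Icc]
    congr 3
    ext b
    simp only [mem_preimage, mem_Icc]
    rw [neg_le, ← neg_mul, neg_le, le_div_iff₀ hT, le_div_iff₀ hT]
  · intro T
    refine Integrable.mono' (integrable_const (1:ℝ)) ?_ ?_
    · exact (Continuous.div continuous_const (by fun_prop)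
        (fun u => by positivity)).aestronglyMeasurable
    · filter_upwards with u
      rw [Real.norm_of_nonneg (by positivity), div_le_one (by positivity)]
      nlinarith [sq_nonneg u]
  · intro T f
    have hm : (m T).map (fun u => -u) = m T := by
      simp only [m]
      rw [Measure.map_smul, Measure.map_map (by fun_prop) (by fun_prop)]
      congr 1
      conv_rhs => rw [← hsym]
      rw [Measure.map_map (by fun_prop) (by fun_prop)]
      congr 1
      ext b; simp
    conv_rhs => rw [← hm]
    exact (integral_map_equiv (MeasurableEquiv.neg ℝ) f).symm
  · intro h
    have := Lm_Icc h0 h2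
    rw [h] at this
    simp at this
    rcases this with h | h <;> linarith
  · intro T
    have : DD (m T) = fun l => GG μ (l * T) / GG μ T := funext (hD T)
    rw [this]
    have := GG_cont μ
    fun_prop
  · filter_upwards [hC, hpos] with T hT hp l
    rw [hD, abs_of_nonneg (div_nonneg (GG_nonneg _ _) (GG_nonneg _ _)), div_le_iff₀ hp]
    exact hT l
  · intro l
    simp_rw [hD]
    rw [DD_Lm h0 h2]
    rcases eq_or_ne l 0 with rfl | hl
    · simp [GG_zero, Real.zero_rpow h0.ne']
    · refine (hrv |l| (abs_pos.2 hl)).congr' ?_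
      filter_upwards [eventually_gt_atTop 0] with T hT
      rw [← GG_abs μ (l * T), abs_mul, abs_of_pos hT]
  · refine (withDensity_absolutelyContinuous _ _) ?_
    exact (Set.toFinite _).measure_zero _

end RV


namespace RV

theorem core_fwd (μ : Measure ℝ) [IsFiniteMeasure μ] (hsym : μ.map (fun u => -u) = μ)
    (α : ℝ) (h0 : 0 < α) (h2 : α < 2) (h : ℝ → ℝ) (hh : ∀ t > 0, 0 < h t)
    (hsv : ∀ s > 0, Tendsto (fun t => h (s * t) / h t) atTop (𝓝 1))
    (H : Tendsto (fun T => GG μ T / (T ^ α * h T)) atTop (𝓝 1)) :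
    Tendsto (fun T => MM μ (1 / T) / (1 / (2 * (2 - α) * II α) * T ^ (α - 2) * h T))
      atTop (𝓝 1) := by
  have hI := II_pos h0 h2
  have hβ : 0 < 2 - α := by linarith
  have hpos : ∀ᶠ T in atTop, 0 < GG μ T := by
    filter_upwards [H.eventually_const_lt (show (0:ℝ) < 1 by norm_num), eventually_gt_atTop 0]
      with T h1 hT
    have : 0 < T ^ α * h T := mul_pos (by positivity) (hh T hT)
    by_contra hc
    have := div_nonpos_of_nonpos_of_nonneg (not_lt.1 hc) this.le
    linarith
  have hrv : ∀ s > 0, Tendsto (fun T => GG μ (s * T) / GG μ T) atTop (𝓝 (s ^ α)) := by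
    intro s hs
    have a1 : Tendsto (fun T => GG μ (s * T) / ((s * T) ^ α * h (s * T))) atTop (𝓝 1) :=
      H.comp (tendsto_id.const_mul_atTop hs)
    have a2 := ((a1.mul (hsv s hs)).mul_const (s ^ α)).div H one_ne_zero
    simp only [one_mul, div_one] at a2
    refine a2.congr' ?_
    filter_upwards [hpos, eventually_gt_atTop 0] with T hp hT
    have b1 := hh T hT
    have b2 := hh (s * T) (by positivity)
    simp only [Pi.div_apply]
    rw [Real.mul_rpow hs.le hT.le]
    have b3 : 0 < s ^ α := by positivity
    have b4 : 0 < T ^ α := by positivity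
    field_simp
  have key := (tauberian μ hsym α h0 h2 hpos hrv).mul H
  have key2 := key.mul_const ((2 - α) * II α)
  rw [mul_one, one_div_mul_cancel (by positivity)] at key2
  refine key2.congr' ?_
  filter_upwards [hpos, eventually_gt_atTop 0] with T hp hT
  have b1 := hh T hT
  have b4 : 0 < T ^ α := by positivity
  rw [Real.rpow_sub hT, Real.rpow_two]
  field_simp

theorem core_bwd (μ : Measure ℝ) [IsFiniteMeasure μ] (hz : μ {0} = 0)
    (α : ℝ) (h1 : 1 ≤ α) (h2 : α < 2) (h : ℝ → ℝ) (hh : ∀ t > 0, 0 < h t)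
    (hsv : ∀ s > 0, Tendsto (fun t => h (s * t) / h t) atTop (𝓝 1))
    (H : Tendsto (fun T => MM μ (1 / T) / (1 / (2 * (2 - α) * II α) * T ^ (α - 2) * h T))
      atTop (𝓝 1)) :
    Tendsto (fun T => GG μ T / (T ^ α * h T)) atTop (𝓝 1) := by
  have h0 : 0 < α := by linarith
  have hI := II_pos h0 h2
  have hβ : 0 < 2 - α := by linarith
  set c := 1 / (2 * (2 - α) * II α) with hc
  have hc0 : 0 < c := by positivity
  have e : ∀ u ∈ Ioi (0:ℝ), (2 - α) * ((1 - Real.cos u) * u ^ (-1 - α))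
      = kk u * ((2 - α) * u ^ ((2 - α) - 1)) := by
    intro u hu
    have hu : 0 < u := hu
    rw [kk_eq hu.ne', show (2 - α) - 1 = (-1 - α) + 2 by ring, Real.rpow_add hu, Real.rpow_two]
    field_simp
  have key := abelian μ hz (2 - α) hβ (by linarith) (fun T => c * T ^ (α - 2) * h T) ?_ ?_ ?_
  · have e2 : ∫ u in Ioi (0:ℝ), kk u * ((2 - α) * u ^ ((2 - α) - 1)) = (2 - α) * II α := by
      rw [← setIntegral_congr_fun measurableSet_Ioi e, integral_const_mul]; rfl
    rw [e2] at key
    have k2 := key.const_mul (2 * c)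
    rw [show 2 * c * ((2 - α) * II α) = 1 by rw [hc]; field_simp] at k2
    refine k2.congr' ?_
    filter_upwards [eventually_gt_atTop 0] with T hT
    have b1 := hh T hT
    have b4 : 0 < T ^ α := by positivity
    rw [GG_eq, Real.rpow_sub hT, Real.rpow_two]
    generalize ∫ b, kk (b * T) ∂μ = q
    field_simp
  · filter_upwards [eventually_gt_atTop 0] with T hT
    have := hh T hT
    positivity
  · intro x hx
    have hx' : 0 < x⁻¹ := by positivity
    have a1 : Tendsto (fun T => MM μ (1 / (x⁻¹ * T)) / (c * (x⁻¹ * T) ^ (α - 2) * h (x⁻¹ * T)))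
        atTop (𝓝 1) := H.comp (tendsto_id.const_mul_atTop hx')
    have a2 := (a1.mul (hsv _ hx')).mul_const (x ^ (2 - α))
    simp only [one_mul] at a2
    refine a2.congr' ?_
    filter_upwards [eventually_gt_atTop 0] with T hT
    have b1 := hh T hT
    have b2 := hh (x⁻¹ * T) (by positivity)
    have b3 : 1 / (x⁻¹ * T) = x / T := by field_simp
    rw [b3, Real.mul_rpow hx'.le hT.le, Real.inv_rpow hx.le, ← Real.rpow_neg hx.le,
      show -(α - 2) = 2 - α by ring]
    have b4 : 0 < x ^ (2 - α) := by positivity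
    have b5 : 0 < T ^ (α - 2) := by positivity
    generalize h (x⁻¹ * T) = q at b2
    generalize x ^ (2 - α) = q at b4
    generalize T ^ (α - 2) = q at b5
    field_simp
  · exact IntegrableOn.congr_fun ((I_integrable α h0 h2).const_mul (2 - α)) e measurableSet_Ioi

lemma const_eq {α : ℝ} (h0 : 0 < α) (h2 : α < 2) :
    Real.Gamma (1 + α) * Real.sin (α * Real.pi / 2) / (Real.pi * (2 - α))
      = 1 / (2 * (2 - α) * II α) := by
  have hs := sin_pos' α h0 h2
  have hG : 0 < Real.Gamma (1 + α) := Real.Gamma_pos_of_pos (by linarith)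
  have hβ : 0 < 2 - α := by linarith
  have := Real.pi_pos
  unfold II
  rw [I_int α h0 h2]
  field_simp

theorem core (μ : Measure ℝ) [IsFiniteMeasure μ] (hsym : μ.map (fun u => -u) = μ)
    (hz : μ {0} = 0) (α : ℝ) (h1 : 1 ≤ α) (h2 : α < 2) (h : ℝ → ℝ) (hh : ∀ t > 0, 0 < h t)
    (hsv : ∀ s > 0, Tendsto (fun t => h (s * t) / h t) atTop (𝓝 1)) :
    Tendsto (fun T => GG μ T / (T ^ α * h T)) atTop (𝓝 1) ↔
    Tendsto (fun x => MM μ x / (Real.Gamma (1 + α) * Real.sin (α * Real.pi / 2) /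
      (Real.pi * (2 - α)) * x ^ (2 - α) * h (1 / x))) (𝓝[>] (0:ℝ)) (𝓝 1) := by
  rw [const_eq (by linarith) h2]
  have step : Tendsto (fun x => MM μ x / (1 / (2 * (2 - α) * II α) * x ^ (2 - α) * h (1 / x)))
      (𝓝[>] (0:ℝ)) (𝓝 1) ↔ Tendsto (fun T => MM μ (1 / T) / (1 / (2 * (2 - α) * II α)
        * T ^ (α - 2) * h T)) atTop (𝓝 1) := by
    rw [← inv_atTop₀, ← Filter.map_inv, tendsto_map'_iff]
    refine tendsto_congr' ?_
    filter_upwards [eventually_gt_atTop 0] with T hT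
    simp only [Function.comp_def, one_div, inv_inv]
    rw [Real.inv_rpow hT.le, ← Real.rpow_neg hT.le, neg_sub]
  rw [step]
  exact ⟨core_fwd μ hsym α (by linarith) h2 h hh hsv, core_bwd μ hz α h1 h2 h hh hsv⟩

end RV


namespace RV

lemma norm_expI_sub_one (q : ℝ) : ‖Complex.exp (Complex.I * q) - 1‖ ≤ |q| :=
  Real.norm_exp_I_mul_ofReal_sub_one_le

lemma norm_exp_diff (w : ℂ) (hw : w.re ≤ 0) :
    ‖Complex.exp w - Complex.exp (Complex.I * w.im)‖ ≤ |w.re| := by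
  have e : Complex.exp w - Complex.exp (Complex.I * w.im)
      = Complex.exp (Complex.I * w.im) * ((Real.exp w.re - 1 : ℝ) : ℂ) := by
    conv_lhs => rw [← Complex.re_add_im w, Complex.exp_add]
    push_cast
    simp
    ring_nf
  rw [e, norm_mul, mul_comm Complex.I, Complex.norm_exp_ofReal_mul_I, one_mul, Complex.norm_real,
    Real.norm_eq_abs, abs_of_nonpos hw, abs_of_nonpos (by linarith [Real.exp_le_one_iff.2 hw])]
  linarith [Real.add_one_le_exp w.re]

lemma bdB (w : ℂ) (hw : w.re ≤ 0) (hq : |w.im| ≤ |w.re|) :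
    ‖(Complex.exp w - w - 1) / w ^ 2‖ ≤ 8 * (|w.re| / ‖w‖ ^ 2) := by
  have h1 := norm_exp_diff w hw
  have h2 := norm_expI_sub_one w.im
  have h3 := Complex.norm_le_abs_re_add_abs_im w
  rw [norm_div, norm_pow, ← mul_div_assoc]
  gcongr
  calc ‖Complex.exp w - w - 1‖
      = ‖(Complex.exp w - Complex.exp (Complex.I * w.im)) +
        (Complex.exp (Complex.I * w.im) - 1) - w‖ := by congr 1; ring
    _ ≤ ‖Complex.exp w - Complex.exp (Complex.I * w.im)‖ +
        ‖Complex.exp (Complex.I * w.im) - 1‖ + ‖w‖ :=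
        (norm_sub_le _ _).trans (by gcongr; exact norm_add_le _ _)
    _ ≤ 8 * |w.re| := by linarith [abs_nonneg w.re]

lemma bdA (w : ℂ) (hw : w.re ≤ 0) (hq : |w.re| ≤ |w.im|) (h0 : w.im ≠ 0) :
    |((Complex.exp w - w - 1) / w ^ 2).re - (1 - Real.cos w.im) / w.im ^ 2|
      ≤ 8 * (|w.re| / ‖w‖ ^ 2) := by
  have hwne : w ≠ 0 := by rintro rfl; simp at h0
  have hqne : (w.im : ℂ) ≠ 0 := by exact_mod_cast h0
  set E := Complex.exp (Complex.I * w.im) with hE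
  have h1 := norm_exp_diff w hw
  rw [← hE] at h1
  have h2 := norm_expI_sub_one w.im
  rw [← hE] at h2
  have e1 : (1 - Real.cos w.im) / w.im ^ 2
      = ((E - Complex.I * w.im - 1) / (-((w.im ^ 2 : ℝ) : ℂ))).re := by
    rw [← Complex.ofReal_neg, Complex.div_ofReal_re]
    have : E.re = Real.cos w.im := by
      rw [hE, mul_comm, Complex.exp_ofReal_mul_I_re]
    simp [this]
    rw [div_neg, ← neg_div]; ring
  rw [e1, ← Complex.sub_re]
  refine (Complex.abs_re_le_norm _).trans ?_
  have e2 : (Complex.exp w - w - 1) / w ^ 2 - (E - Complex.I * w.im - 1) / (-((w.im ^ 2 : ℝ) : ℂ))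
      = ((Complex.exp w - E) - w.re) / w ^ 2
        + (E - 1 - Complex.I * w.im) * (w.re * (w.re + 2 * Complex.I * w.im))
          / (w ^ 2 * (w.im : ℂ) ^ 2) := by
    have hw2 : w ^ 2 = (w.re + Complex.I * w.im) ^ 2 := by
      conv_lhs => rw [← Complex.re_add_im w]
      ring
    have hne2 : ((w.re : ℂ) + Complex.I * w.im) ^ 2 ≠ 0 := by rw [← hw2]; exact pow_ne_zero 2 hwne
    have e3 : Complex.exp w - w - 1
        = Complex.exp w - (w.re + Complex.I * w.im) - 1 := by
      congr 2
      conv_lhs => rw [← Complex.re_add_im w]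
      ring
    rw [e3, hw2]
    generalize Complex.exp w = X at *
    generalize (w.re : ℂ) = p at *
    generalize hh : w.im = q at *
    push_cast
    have hpq : p + Complex.I * (q:ℂ) ≠ 0 := fun h => hne2 (by rw [h]; ring)
    field_simp
    ring_nf
    have hI3 : Complex.I ^ 3 = -Complex.I := by rw [pow_succ, Complex.I_sq]; ring
    simp only [Complex.I_sq, hI3]
    ring
  rw [e2]
  have hn : 0 < ‖w‖ ^ 2 := by positivity
  have hq2 : 0 < w.im ^ 2 := by positivity
  have b1 : ‖((Complex.exp w - E) - w.re) / w ^ 2‖ ≤ 2 * (|w.re| / ‖w‖ ^ 2) := by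
    rw [norm_div, norm_pow, ← mul_div_assoc]
    gcongr
    refine (norm_sub_le _ _).trans ?_
    rw [Complex.norm_real, Real.norm_eq_abs]; linarith
  have b2 : ‖(E - 1 - Complex.I * w.im) * (w.re * (w.re + 2 * Complex.I * w.im))
          / (w ^ 2 * (w.im : ℂ) ^ 2)‖ ≤ 6 * (|w.re| / ‖w‖ ^ 2) := by
    have c1 : ‖E - 1 - Complex.I * w.im‖ ≤ 2 * |w.im| := by
      refine (norm_sub_le _ _).trans ?_
      rw [norm_mul, Complex.norm_I, Complex.norm_real, Real.norm_eq_abs]; linarith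
    have c2 : ‖(w.re : ℂ) + 2 * Complex.I * w.im‖ ≤ 3 * |w.im| := by
      refine (norm_add_le _ _).trans ?_
      simp only [norm_mul, Complex.norm_I, Complex.norm_real, Real.norm_eq_abs]
      norm_num
      linarith
    rw [norm_div, norm_mul, norm_mul, norm_mul, norm_pow, norm_pow, Complex.norm_real,
      Complex.norm_real, Real.norm_eq_abs, Real.norm_eq_abs, sq_abs]
    calc _ ≤ 2 * |w.im| * (|w.re| * (3 * |w.im|)) / (‖w‖ ^ 2 * w.im ^ 2) := by gcongr
      _ = 6 * |w.re| * |w.im| ^ 2 / (‖w‖ ^ 2 * w.im ^ 2) := by ring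
      _ = _ := by rw [sq_abs]; field_simp
  calc _ ≤ _ := norm_add_le _ _
    _ ≤ _ := by linarith

def UU : Set ℂ := {z | 0 ≤ -z.re ∧ -z.re ≤ |z.im|}

lemma UU_meas : MeasurableSet UU := by
  have h1 : MeasurableSet {z : ℂ | 0 ≤ -z.re} :=
    measurableSet_le measurable_const (by fun_prop)
  have h2 : MeasurableSet {z : ℂ | -z.re ≤ |z.im|} :=
    measurableSet_le (by fun_prop) (by fun_prop)
  exact h1.inter h2

lemma bd (z : ℂ) (hz : z ≠ 0) (hre : z.re ≤ 0) {T : ℝ} (hT : 0 < T) :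
    |((Complex.exp (z * (T : ℂ)) - z * (T : ℂ) - 1) / z ^ 2).re
      - UU.indicator (fun z => pp T z.im) z| ≤ 8 * T * (-(z⁻¹.re)) := by
  set w := z * (T:ℂ) with hw
  have wre : w.re = z.re * T := by simp [hw]
  have wim : w.im = z.im * T := by simp [hw]
  have hTc : (T:ℂ) ≠ 0 := by exact_mod_cast hT.ne'
  have hwre : w.re ≤ 0 := by rw [wre]; nlinarith
  have e1 : ((Complex.exp w - w - 1) / z ^ 2).re
      = T ^ 2 * ((Complex.exp w - w - 1) / w ^ 2).re := by
    rw [← Complex.re_ofReal_mul]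
    congr 1
    rw [show w ^ 2 = z ^ 2 * (T:ℂ) ^ 2 by rw [hw]; ring]
    push_cast
    field_simp
  have hzn : 0 < ‖z‖ := norm_pos_iff.2 hz
  have e2 : 8 * T * (-(z⁻¹.re)) = T ^ 2 * (8 * (|w.re| / ‖w‖ ^ 2)) := by
    rw [Complex.inv_re, abs_of_nonpos hwre, wre, hw, norm_mul, Complex.norm_real,
      Real.norm_eq_abs, abs_of_pos hT, Complex.normSq_eq_norm_sq]
    field_simp
  rw [e1, e2]
  by_cases hU : z ∈ UU
  · rw [indicator_of_mem hU]
    have him : z.im ≠ 0 := by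
      intro h
      have h1 := hU.2
      rw [h, abs_zero] at h1
      exact hz (Complex.ext (by simp; linarith [hU.1]) (by simp [h]))
    have hq : |w.re| ≤ |w.im| := by
      rw [wre, wim, abs_mul, abs_mul, abs_of_nonpos hre]
      have := hU.2
      gcongr
    have e3 : pp T z.im = T ^ 2 * ((1 - Real.cos w.im) / w.im ^ 2) := by
      rw [pp_eq _ him, wim]; field_simp
    rw [e3, ← mul_sub, abs_mul, abs_of_pos (by positivity : 0 < T ^ 2)]
    gcongr
    exact bdA w hwre hq (by rw [wim]; exact mul_ne_zero him hT.ne')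
  · rw [indicator_of_notMem hU, sub_zero, abs_mul, abs_of_pos (by positivity : 0 < T ^ 2)]
    gcongr
    refine (Complex.abs_re_le_norm _).trans (bdB w hwre ?_)
    have : |z.im| < -z.re := by
      by_contra h
      exact hU ⟨by linarith, not_lt.1 h⟩
    rw [wre, wim, abs_mul, abs_mul, abs_of_nonpos hre]
    gcongr

noncomputable def muOf (ν : Measure ℂ) : Measure ℝ := (ν.restrict UU).map Complex.im

section
variable (ν : Measure ℂ) [IsFiniteMeasure ν]

instance : IsFiniteMeasure (muOf ν) := by unfold muOf; infer_instance

lemma muOf_zero (h0 : ν {(0 : ℂ)} = 0) : muOf ν {0} = 0 := by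
  unfold muOf
  rw [Measure.map_apply Complex.measurable_im (measurableSet_singleton 0),
    Measure.restrict_apply (Complex.measurable_im (measurableSet_singleton 0))]
  refine measure_mono_null ?_ h0
  rintro z ⟨h1, h2⟩
  have h1 : z.im = 0 := h1
  have h3 := h2.2
  rw [h1, abs_zero] at h3
  exact Complex.ext (by simp; linarith [h2.1]) (by simp [h1])

lemma muOf_MM (x : ℝ) :
    MM (muOf ν) x = (ν {z : ℂ | 0 ≤ -z.re ∧ -z.re ≤ |z.im| ∧ |z.im| ≤ x}).toReal := by
  unfold MM muOf Measure.real
  rw [Measure.map_apply Complex.measurable_im measurableSet_Icc,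
    Measure.restrict_apply (Complex.measurable_im measurableSet_Icc)]
  congr 2
  ext z
  simp only [mem_inter_iff, mem_preimage, mem_Icc, UU, mem_ofPred_eq, abs_le (b := x)]
  tauto

lemma muOf_sym (hconj : ∀ A : Set ℂ, MeasurableSet A → ν ((starRingEnd ℂ) ⁻¹' A) = ν A) :
    (muOf ν).map (fun u => -u) = muOf ν := by
  ext s hs
  unfold muOf
  have hn : MeasurableSet ((fun u : ℝ => -u) ⁻¹' s) := measurable_neg hs
  rw [Measure.map_apply measurable_neg hs, Measure.map_apply Complex.measurable_im hn,
    Measure.map_apply Complex.measurable_im hs,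
    Measure.restrict_apply (Complex.measurable_im hn),
    Measure.restrict_apply (Complex.measurable_im hs),
    ← hconj _ ((Complex.measurable_im hs).inter UU_meas)]
  congr 1
  ext z
  simp [UU]

lemma muOf_GG (T : ℝ) : GG (muOf ν) T = 2 * ∫ z, UU.indicator (fun z => pp T z.im) z ∂ν := by
  unfold GG muOf
  rw [integral_map Complex.measurable_im.aemeasurable, integral_indicator UU_meas]
  exact (pp_cont2.comp (by fun_prop : Continuous fun u : ℝ => (T, u))).aestronglyMeasurable

theorem var_diff (hsupp : ν {z : ℂ | ¬ z.re ≤ 0} = 0) (h0 : ν {(0 : ℂ)} = 0)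
    (hς : 2 * ∫⁻ z, ENNReal.ofReal (-(z⁻¹.re)) ∂ν < ⊤) :
    ∃ K : ℝ, ∀ T > 0, |2 * ∫ z, ((Complex.exp (z * (T : ℂ)) - z * (T : ℂ) - 1) / z ^ 2).re ∂ν
      - GG (muOf ν) T| ≤ K * T := by
  have hae1 : ∀ᵐ z ∂ν, z.re ≤ 0 := hsupp
  have hae2 : ∀ᵐ z ∂ν, z ≠ 0 := by rw [ae_iff]; simpa using h0
  have hV : Integrable (fun z : ℂ => -(z⁻¹.re)) ν := by
    refine ⟨(by fun_prop : Measurable (fun z : ℂ => -(z⁻¹.re))).aestronglyMeasurable, ?_⟩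
    rw [hasFiniteIntegral_iff_ofReal]
    · by_contra h
      rw [not_lt, top_le_iff] at h
      rw [h] at hς
      simp at hς
    · filter_upwards [hae1] with z hz
      simp only [Pi.zero_apply, Complex.inv_re]
      rw [← neg_div]
      exact div_nonneg (by linarith) (Complex.normSq_nonneg z)
  refine ⟨2 * (8 * ∫ z, -(z⁻¹.re) ∂ν), fun T hT => ?_⟩
  rw [muOf_GG, ← mul_sub]
  set f : ℂ → ℝ := fun z => ((Complex.exp (z * (T : ℂ)) - z * (T : ℂ) - 1) / z ^ 2).re
  set g : ℂ → ℝ := UU.indicator (fun z => pp T z.im)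
  have hgm : Measurable (fun z : ℂ => pp T z.im) :=
    (pp_cont2.comp (by fun_prop : Continuous fun z : ℂ => (T, z.im))).measurable
  have hgi : Integrable g ν := by
    apply Integrable.indicator _ UU_meas
    have := (pp_integrable (ν.map Complex.im) T).comp_measurable Complex.measurable_im
    exact this
  have hbd : ∀ᵐ z ∂ν, ‖f z - g z‖ ≤ 8 * T * (-(z⁻¹.re)) := by
    filter_upwards [hae1, hae2] with z h1 h2
    exact bd z h2 h1 hT
  have hfm : Measurable f := by fun_prop
  have hfg : Integrable (fun z => f z - g z) ν :=
    (hV.const_mul (8 * T)).mono' (hfm.aestronglyMeasurable.sub hgi.1) hbd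
  have hfi : Integrable f ν := by
    have := hfg.add hgi
    refine this.congr ?_
    filter_upwards with z
    simp
  rw [← integral_sub hfi hgi, abs_mul, abs_two]
  have := norm_integral_le_of_norm_le (hV.const_mul (8 * T)) hbd
  rw [integral_const_mul, Real.norm_eq_abs] at this
  linarith

end

theorem transfer (V G X : ℝ → ℝ) (K : ℝ) (hd : ∀ T > 0, |V T - G T| ≤ K * T)
    (hinf : Tendsto (fun T : ℝ => V T / T) atTop atTop) :
    Tendsto (fun T => V T / X T) atTop (𝓝 1) ↔ Tendsto (fun T => G T / X T) atTop (𝓝 1) := by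
  have hVpos : ∀ᶠ T in atTop, 0 < V T := by
    filter_upwards [hinf.eventually_gt_atTop 0, eventually_gt_atTop 0] with T h1 h2
    rw [lt_div_iff₀ h2] at h1; linarith
  have hr : Tendsto (fun T => G T / V T) atTop (𝓝 1) := by
    rw [tendsto_iff_norm_sub_tendsto_zero]
    have hK : Tendsto (fun T => K * (V T / T)⁻¹) atTop (𝓝 0) := by
      simpa using hinf.inv_tendsto_atTop.const_mul K
    refine squeeze_zero' (Eventually.of_forall fun _ => norm_nonneg _) ?_ hK
    filter_upwards [hVpos, eventually_gt_atTop 0] with T h1 h2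
    rw [div_sub_one h1.ne', Real.norm_eq_abs, abs_div, abs_of_pos h1, abs_sub_comm, inv_div,
      ← mul_div_assoc]
    gcongr
    exact hd T h2
  have hG : ∀ᶠ T in atTop, G T / V T ≠ 0 := hr.eventually_ne one_ne_zero
  constructor
  · intro h
    have := h.mul hr
    rw [one_mul] at this
    refine this.congr' ?_
    filter_upwards [hVpos] with T h1
    rw [mul_comm, div_mul_div_cancel₀ h1.ne']
  · intro h
    have := h.div hr one_ne_zero
    rw [one_div_one] at this
    refine this.congr' ?_
    filter_upwards [hVpos, hG] with T h1 h2
    have h3 : G T ≠ 0 := fun h => h2 (by rw [h, zero_div])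
    change G T / X T / (G T / V T) = V T / X T
    rw [div_div_div_comm, div_self h3, one_div, inv_div]

end RV

end

/-- **Theorem 3.2 (second part).**  Let `ν` be a finite conjugation-invariant
measure on the closed left half-plane with `ν({0}) = 0`, `ς² < ∞` and
`liminf Var(T)/T = ∞`.  For `α ∈ [1,2)` and `h` slowly varying:
`Var(T) ~ T^α h(T)` as `T → ∞` iff `ν(U_x) ~ C(α) x^{2-α} h(1/x)` as
`x → 0⁺`. -/
theorem continuous_time_regular_variation_iff
    (ν : Measure ℂ) [IsFiniteMeasure ν]
    (hsupp : ν {z : ℂ | ¬ z.re ≤ 0} = 0)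
    (h0 : ν {(0 : ℂ)} = 0)
    (hconj : ∀ A : Set ℂ, MeasurableSet A → ν ((starRingEnd ℂ) ⁻¹' A) = ν A)
    (hς : varsigmaSq ν < ⊤)
    (hinf : Tendsto (fun T : ℝ => VarCt ν T / T) atTop atTop)
    (α : ℝ) (hα : α ∈ Set.Ico (1:ℝ) 2)
    (h : ℝ → ℝ) (hh : SlowlyVaryingAtTop h) :
    Tendsto (fun T : ℝ => VarCt ν T / (T ^ α * h T)) atTop (𝓝 1) ↔
      Tendsto (fun x : ℝ => (ν (UsetCt x)).toReal / (Cconst α * x ^ (2 - α) * h (1/x)))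
        (𝓝[>] (0:ℝ)) (𝓝 1) := by
  obtain ⟨hpos, _, hsv⟩ := hh
  obtain ⟨K, hK⟩ := RV.var_diff ν hsupp h0 hς
  rw [RV.transfer (VarCt ν) (RV.GG (RV.muOf ν)) (fun T => T ^ α * h T) K hK hinf,
    RV.core (RV.muOf ν) (RV.muOf_sym ν hconj) (RV.muOf_zero ν h0) α hα.1 hα.2 h hpos hsv]
  simp only [RV.muOf_MM, UsetCt, Cconst]
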